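/- arXiv:2002.09221 — 9 statements merged into one kernel-verified Lean document; each statement's English description precedes it below -/
import Mathlib

section
/- Let V : ℝⁿ → ℝ be C² with e^{-V} integrable and μ the probability measure with density proportional to e^{-V}. Let ρ : ℝⁿ → ℝ be continuous with ⟨u, Hess V(x) u⟩ ≥ ρ(x)‖u‖² for all x, u, ρ ≥ ρ₀ for some ρ₀ ∈ ℝ, and m := ∫ρ dμ > 0. Let c be a lower semicontinuous symmetric cost with c(x,x)=0 and L := ‖ρ‖_c < ∞, and let α : [0,∞) → [0,∞) be continuous, increasing, α(0)=0, such that α(T_c(ν,μ)) ≤ I(ν|μ) for every probability measure ν = f·μ with f positive and C¹. If r > 2 and ε ∈ (0,1) satisfy r·ρ₀ + α((1−ε)m/L) > 0, then for every smooth compactly supported g, Var_μ(g) ≤ (1/min(ε·m, ρ₀ + α((1−ε)m/L)/r)) ∫‖∇g‖² dμ. -/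
open MeasureTheory Real Set
open scoped ENNReal RealInnerProductSpace

/-- The transportation cost `T_c(ν,μ)`: infimum of `∫ c dπ` over couplings `π` of `ν` and `μ`. -/
noncomputable def transportCost {E : Type*} [MeasurableSpace E]
    (c : E → E → ℝ≥0∞) (ν μ : MeasureTheory.Measure E) : ℝ≥0∞ :=
  ⨅ cpl ∈ {cpl : MeasureTheory.Measure (E × E) |
      cpl.map Prod.fst = ν ∧ cpl.map Prod.snd = μ ∧ MeasureTheory.IsProbabilityMeasure cpl},
    ∫⁻ p, c p.1 p.2 ∂cpl

/-- The norm `‖ρ‖_c = sup_{x ≠ y} |ρ(x) - ρ(y)| / c(x,y)` (the diagonal contributes `0/0 = 0`). -/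
noncomputable def costLipNorm {E : Type*} (c : E → E → ℝ≥0∞) (ρ : E → ℝ) : ℝ≥0∞ :=
  ⨆ x, ⨆ y, ENNReal.ofReal |ρ x - ρ y| / c x y

theorem aux_lip {E : Type*} (c : E → E → ℝ≥0∞) (ρ : E → ℝ) (hL : costLipNorm c ρ ≠ ⊤) (x y : E)
    (hc : c x y ≠ ⊤) : ENNReal.ofReal |ρ x - ρ y| ≤ costLipNorm c ρ * c x y := by
  have h : ENNReal.ofReal |ρ x - ρ y| / c x y ≤ costLipNorm c ρ :=
    le_iSup₂_of_le (f := fun x y => ENNReal.ofReal |ρ x - ρ y| / c x y) x y le_rfl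
  refine (ENNReal.div_le_iff_le_mul (Or.inr hL) (Or.inl hc)).1 h

theorem aux_transport {E : Type*} [TopologicalSpace E] [MeasurableSpace E] [OpensMeasurableSpace (E × E)]
    (c : E → E → ℝ≥0∞) (hc : LowerSemicontinuous (fun p : E × E => c p.1 p.2))
    (ρ : E → ℝ) (μ ν : Measure E) (hL : costLipNorm c ρ ≠ ⊤)
    (hμ : Integrable ρ μ) (hν : Integrable ρ ν) (a : ℝ) (ha : 0 < a)
    (hT : transportCost c ν μ < ENNReal.ofReal a / costLipNorm c ρ) :
    ∫ x, ρ x ∂μ - ∫ x, ρ x ∂ν ≤ a := by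
  unfold transportCost at hT
  simp only [iInf_lt_iff] at hT
  obtain ⟨pp, ⟨h1, h2, h3⟩, hlt⟩ := hT
  have hcm : Measurable (fun p : E × E => c p.1 p.2) := hc.measurable
  have hfin : ∫⁻ p, c p.1 p.2 ∂pp ≠ ⊤ := ne_top_of_lt hlt
  have hae : ∀ᵐ p ∂pp, c p.1 p.2 < ⊤ := ae_lt_top hcm hfin
  have hi1 : Integrable (fun p : E × E => ρ p.1) pp := by
    rw [← h1] at hν
    exact hν.comp_measurable measurable_fst
  have hi2 : Integrable (fun p : E × E => ρ p.2) pp := by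
    rw [← h2] at hμ
    exact hμ.comp_measurable measurable_snd
  have e1 : ∫ x, ρ x ∂ν = ∫ p, ρ p.1 ∂pp := by
    rw [← h1] at hν ⊢
    exact integral_map measurable_fst.aemeasurable hν.1
  have e2 : ∫ x, ρ x ∂μ = ∫ p, ρ p.2 ∂pp := by
    rw [← h2] at hμ ⊢
    exact integral_map measurable_snd.aemeasurable hμ.1
  rw [e1, e2, ← integral_sub hi2 hi1]
  have hle : ∫⁻ p, ENNReal.ofReal |ρ p.2 - ρ p.1| ∂pp ≤ ENNReal.ofReal a := by
    calc ∫⁻ p, ENNReal.ofReal |ρ p.2 - ρ p.1| ∂pp ≤ ∫⁻ p, costLipNorm c ρ * c p.1 p.2 ∂pp := by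
          apply lintegral_mono_ae
          filter_upwards [hae] with p hp
          rw [abs_sub_comm]
          exact aux_lip c ρ hL _ _ hp.ne
      _ = costLipNorm c ρ * ∫⁻ p, c p.1 p.2 ∂pp := lintegral_const_mul _ hcm
      _ ≤ ENNReal.ofReal a := by
          rw [mul_comm]
          exact ENNReal.mul_le_of_le_div hlt.le
  calc ∫ p, (ρ p.2 - ρ p.1) ∂pp ≤ ∫ p, |ρ p.2 - ρ p.1| ∂pp :=
        integral_mono (hi2.sub hi1) (hi2.sub hi1).abs (fun p => le_abs_self _)
    _ = (∫⁻ p, ENNReal.ofReal |ρ p.2 - ρ p.1| ∂pp).toReal :=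
        integral_eq_lintegral_of_nonneg_ae (ae_of_all _ fun _ => abs_nonneg _) (hi2.sub hi1).abs.1
    _ ≤ a := ENNReal.toReal_le_of_le_ofReal ha.le hle

/-- partial derivative -/
noncomputable def pd {n : ℕ} (i : Fin n) (u : EuclideanSpace ℝ (Fin n) → ℝ)
    (x : EuclideanSpace ℝ (Fin n)) : ℝ := fderiv ℝ u x (EuclideanSpace.single i (1:ℝ))

theorem grad_apply {n : ℕ} (u : EuclideanSpace ℝ (Fin n) → ℝ) (x) (i : Fin n) :
    gradient u x i = pd i u x := by
  have h := InnerProductSpace.toDual_symm_apply (𝕜 := ℝ) (x := EuclideanSpace.single i (1:ℝ))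
    (y := fderiv ℝ u x)
  rw [EuclideanSpace.inner_single_right] at h
  simpa [gradient, pd] using h

theorem norm_grad_sq {n : ℕ} (u : EuclideanSpace ℝ (Fin n) → ℝ) (x) :
    ‖gradient u x‖ ^ 2 = ∑ i, pd i u x ^ 2 := by
  rw [EuclideanSpace.norm_sq_eq]
  simp [grad_apply]

theorem cpt_int {n : ℕ} (μ : Measure (EuclideanSpace ℝ (Fin n))) [IsFiniteMeasureOnCompacts μ]
    {u : EuclideanSpace ℝ (Fin n) → ℝ} (hu : Continuous u) (h : HasCompactSupport u) :
    Integrable u μ := hu.integrable_of_hasCompactSupport h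

theorem pd_cont {n : ℕ} (i : Fin n) {u : EuclideanSpace ℝ (Fin n) → ℝ} (hu : ContDiff ℝ 1 u) :
    Continuous (pd i u) := (hu.continuous_fderiv (by norm_num)).clm_apply continuous_const

theorem pd_cd {n : ℕ} (i : Fin n) {u : EuclideanSpace ℝ (Fin n) → ℝ} (hu : ContDiff ℝ 2 u) :
    ContDiff ℝ 1 (pd i u) :=
  (hu.fderiv_right (m := 1) (by norm_num)).clm_apply contDiff_const

theorem pd_supp {n : ℕ} (i : Fin n) {u : EuclideanSpace ℝ (Fin n) → ℝ} (hu : HasCompactSupport u) :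
    HasCompactSupport (pd i u) := hu.fderiv_apply ℝ _

theorem FI {n : ℕ} (ρ : EuclideanSpace ℝ (Fin n) → ℝ)
    (μ : Measure (EuclideanSpace ℝ (Fin n))) [IsProbabilityMeasure μ]
    (hρcont : Continuous ρ)
    (ρ₀ : ℝ) (hρ₀ : ∀ x, ρ₀ ≤ ρ x)
    (m : ℝ) (hm : m = ∫ x, ρ x ∂μ) (hmpos : 0 < m)
    (c : EuclideanSpace ℝ (Fin n) → EuclideanSpace ℝ (Fin n) → ℝ≥0∞)
    (hclsc : LowerSemicontinuous
      (fun p : EuclideanSpace ℝ (Fin n) × EuclideanSpace ℝ (Fin n) => c p.1 p.2))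
    (L : ℝ≥0∞) (hLdef : L = costLipNorm c ρ) (hLfin : L ≠ ⊤)
    (α : ℝ≥0∞ → ℝ≥0∞) (hαmono : StrictMono α)
    (hWI : ∀ f : EuclideanSpace ℝ (Fin n) → ℝ, (∀ x, 0 < f x) → ContDiff ℝ 1 f →
      IsProbabilityMeasure (μ.withDensity fun x => ENNReal.ofReal (f x)) →
      α (transportCost c (μ.withDensity fun x => ENNReal.ofReal (f x)) μ) ≤
        ∫⁻ x, ENNReal.ofReal (‖gradient (fun y => Real.sqrt (f y)) x‖ ^ 2) ∂μ)
    (r ε : ℝ) (hr : 2 < r) (hε : ε ∈ Set.Ioo (0 : ℝ) 1)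
    (lam : ℝ) (hl0 : 0 < lam)
    (hlam : lam = min (ε * m) (ρ₀ + (α (ENNReal.ofReal ((1 - ε) * m) / L)).toReal / r))
    (X : Fin n → EuclideanSpace ℝ (Fin n) → ℝ) (hX : ∀ i, ContDiff ℝ 1 (X i))
    (hXc : ∀ i, HasCompactSupport (X i)) :
    lam * ∫ x, ∑ i, X i x ^ 2 ∂μ ≤ ∫ x, ∑ i, ∑ j, pd j (X i) x ^ 2 ∂μ
      + ∫ x, ρ x * ∑ i, X i x ^ 2 ∂μ := by
  have hρint : Integrable ρ μ := by
    by_contra h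
    rw [integral_undef h] at hm
    exact hmpos.ne' hm
  set S : EuclideanSpace ℝ (Fin n) → ℝ := fun x => ∑ i, X i x ^ 2 with hS
  have hScd : ContDiff ℝ 1 S := ContDiff.sum fun i _ => (hX i).pow 2
  have hS0 : ∀ x, 0 ≤ S x := fun x => Finset.sum_nonneg fun i _ => sq_nonneg _
  have hSc : HasCompactSupport S := by
    have : ∀ i, HasCompactSupport (fun x => X i x ^ 2) := fun i =>
      (hXc i).comp_left (g := fun t : ℝ => t ^ 2) (by simp)
    have h2 : S = ∑ i, (fun x => X i x ^ 2) := by ext x; simp [hS]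
    rw [h2]
    exact Finset.sum_induction _ HasCompactSupport (fun _ _ h h' => h.add h')
      (HasCompactSupport.zero) (fun i _ => this i)
  have hSi : Integrable S μ := cpt_int μ hScd.continuous hSc
  set Q := ∫ x, ∑ i, ∑ j, pd j (X i) x ^ 2 ∂μ with hQ
  have hQi : Integrable (fun x => ∑ i, ∑ j, pd j (X i) x ^ 2) μ :=
    integrable_finsetSum _ fun i _ => integrable_finsetSum _ fun j _ =>
      cpt_int μ ((pd_cont j (hX i)).pow 2)
        ((pd_supp j (hXc i)).comp_left (g := fun t : ℝ => t ^ 2) (by simp))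
  have hρSi : Integrable (fun x => ρ x * S x) μ :=
    cpt_int μ (hρcont.mul hScd.continuous) hSc.mul_left
  have hQ0 : 0 ≤ Q := integral_nonneg fun x =>
    Finset.sum_nonneg fun i _ => Finset.sum_nonneg fun j _ => sq_nonneg _
  have hint0 : 0 ≤ ∫ x, S x ∂μ := integral_nonneg hS0
  suffices H : ∀ δ > 0, lam * ∫ x, S x ∂μ ≤ Q + ∫ x, ρ x * S x ∂μ + δ * m by
    refine le_of_forall_pos_le_add fun η hη => ?_
    have := H (η / m) (by positivity)
    rwa [div_mul_cancel₀ _ hmpos.ne'] at this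
  intro δ hδ
  set Z := ∫ x, S x ∂μ + δ with hZ
  have hZ0 : 0 < Z := by positivity
  set f : EuclideanSpace ℝ (Fin n) → ℝ := fun x => (S x + δ) / Z with hf
  have hfpos : ∀ x, 0 < f x := fun x => by have := hS0 x; positivity
  have hfcd : ContDiff ℝ 1 f := (hScd.add contDiff_const).div_const _
  have hfi : Integrable f μ := (hSi.add (integrable_const _)).div_const _
  have hfone : ∫ x, f x ∂μ = 1 := by
    rw [hf, integral_div, integral_add hSi (integrable_const _)]
    simp [← hZ, hZ0.ne']
  have hprob : IsProbabilityMeasure (μ.withDensity fun x => ENNReal.ofReal (f x)) := by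
    refine ⟨?_⟩
    rw [withDensity_apply _ MeasurableSet.univ, Measure.restrict_univ,
      ← ofReal_integral_eq_lintegral_ofReal hfi (ae_of_all _ fun x => (hfpos x).le), hfone]
    simp
  have hW := hWI f hfpos hfcd hprob
  set ν := μ.withDensity fun x => ENNReal.ofReal (f x) with hν
  have hfm : Measurable (fun x => ENNReal.ofReal (f x)) := hfcd.continuous.measurable.ennreal_ofReal
  have hρfi : Integrable (fun x => f x * ρ x) μ := by
    have : (fun x => f x * ρ x) = fun x => (ρ x * S x) / Z + ρ x * (δ / Z) := by
      ext x; simp only [hf]; ring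
    rw [this]
    exact (hρSi.div_const _).add (hρint.mul_const _)
  have hρν : Integrable ρ ν := by
    rw [hν, integrable_withDensity_iff hfm (ae_of_all _ fun _ => ENNReal.ofReal_lt_top)]
    simpa [ENNReal.toReal_ofReal (hfpos _).le, mul_comm] using hρfi
  have hρνe : ∫ x, ρ x ∂ν = (∫ x, ρ x * S x ∂μ + δ * m) / Z := by
    rw [hν, integral_withDensity_eq_integral_toReal_smul hfm (ae_of_all _ fun _ => ENNReal.ofReal_lt_top)]
    simp only [ENNReal.toReal_ofReal (hfpos _).le, smul_eq_mul]
    have : (fun x => f x * ρ x) = fun x => (ρ x * S x) / Z + ρ x * (δ / Z) := by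
      ext x; simp only [hf]; ring
    rw [this, integral_add (hρSi.div_const _) (hρint.mul_const _), integral_div, integral_mul_const, ← hm]
    ring
  have hgrad : ∀ x, ‖gradient (fun y => Real.sqrt (f y)) x‖ ^ 2 ≤ (∑ i, ∑ j, pd j (X i) x ^ 2) / Z := by
    intro x
    rw [norm_grad_sq, Finset.sum_comm, Finset.sum_div]
    refine Finset.sum_le_sum fun j _ => ?_
    have hd : HasFDerivAt f ((1 / Z) • ∑ i, (2 * X i x) • fderiv ℝ (X i) x) x := by
      have h1 : ∀ i, HasFDerivAt (fun y => X i y ^ 2) ((2 * X i x) • fderiv ℝ (X i) x) x := fun i => by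
        have := ((hX i).differentiable (by norm_num) x).hasFDerivAt.pow 2
        simpa [two_mul, add_smul] using this
      have h2 : HasFDerivAt S (∑ i, (2 * X i x) • fderiv ℝ (X i) x) x := by
        have := HasFDerivAt.fun_sum (u := Finset.univ) fun i _ => h1 i
        simpa [hS] using this
      have h3 := (h2.add_const δ).const_mul (1 / Z)
      have hfe : f = fun y => 1 / Z * (S y + δ) := by
        funext y; show (S y + δ) / Z = 1 / Z * (S y + δ); ring
      rw [hfe]; exact h3
    have hp : pd j (fun y => Real.sqrt (f y)) x = (∑ i, X i x * pd j (X i) x) / (Z * Real.sqrt (f x)) := by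
      have := (hd.sqrt (hfpos x).ne').fderiv
      unfold pd
      rw [this]
      simp only [smul_apply, sum_apply, smul_eq_mul]
      have hs : 0 < Real.sqrt (f x) := Real.sqrt_pos.2 (hfpos x)
      simp_rw [mul_assoc, ← Finset.mul_sum]
      field_simp
    rw [hp, div_pow, mul_pow, Real.sq_sqrt (hfpos x).le]
    have hcs : (∑ i, X i x * pd j (X i) x) ^ 2 ≤ (∑ i, X i x ^ 2) * ∑ i, pd j (X i) x ^ 2 :=
      Finset.sum_mul_sq_le_sq_mul_sq _ _ _
    have hden : Z ^ 2 * f x = Z * (S x + δ) := by simp only [hf]; field_simp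
    have hSd : 0 < S x + δ := by have := hS0 x; positivity
    rw [hden, div_le_div_iff₀ (by positivity) hZ0]
    have hA : 0 ≤ ∑ i, pd j (X i) x ^ 2 := Finset.sum_nonneg fun i _ => sq_nonneg _
    have h3 : (∑ i, X i x * pd j (X i) x) ^ 2 ≤ (∑ i, pd j (X i) x ^ 2) * (S x + δ) := by
      refine hcs.trans ?_
      have : (∑ i, X i x ^ 2) = S x := rfl
      rw [this]
      nlinarith
    nlinarith
  have hW2 : α (transportCost c ν μ) ≤ ENNReal.ofReal (Q / Z) := by
    refine hW.trans ?_
    rw [hQ, ← integral_div, ofReal_integral_eq_lintegral_ofReal (hQi.div_const _)]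
    · exact lintegral_mono fun x => ENNReal.ofReal_le_ofReal (hgrad x)
    · exact ae_of_all _ fun x => div_nonneg (Finset.sum_nonneg fun i _ =>
        Finset.sum_nonneg fun j _ => sq_nonneg _) hZ0.le
  have key : lam ≤ Q / Z + (∫ x, ρ x * S x ∂μ + δ * m) / Z := by
    rcases lt_or_ge (transportCost c ν μ) (ENNReal.ofReal ((1 - ε) * m) / L) with hT | hT
    · have h1 := aux_transport c hclsc ρ μ ν (hLdef ▸ hLfin) hρint hρν ((1 - ε) * m)
        (mul_pos (by linarith [hε.2]) hmpos) (hLdef ▸ hT)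
      rw [← hm, hρνe] at h1
      have h2 : lam ≤ ε * m := hlam ▸ min_le_left _ _
      have : 0 ≤ Q / Z := by positivity
      linarith
    · have h1 := (hαmono.monotone hT).trans hW2
      have h2 := ENNReal.toReal_le_of_le_ofReal (by positivity) h1
      set A := (α (ENNReal.ofReal ((1 - ε) * m) / L)).toReal with hA
      have hA0 : 0 ≤ A := ENNReal.toReal_nonneg
      have h3 : lam ≤ ρ₀ + A / r := hlam ▸ min_le_right _ _
      have h4 : A / r ≤ A := div_le_self hA0 (by linarith)
      have h5 : ρ₀ ≤ ∫ x, ρ x ∂ν := by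
        have := integral_mono (integrable_const ρ₀) hρν hρ₀
        simpa using this
      rw [hρνe] at h5
      linarith
  rw [← add_div, le_div_iff₀ hZ0] at key
  have : lam * ∫ x, S x ∂μ ≤ lam * Z := by
    apply mul_le_mul_of_nonneg_left _ hl0.le
    rw [hZ]; linarith
  linarith

theorem pd_mul {n : ℕ} (i : Fin n) {a b : EuclideanSpace ℝ (Fin n) → ℝ} {x : EuclideanSpace ℝ (Fin n)}
    (ha : DifferentiableAt ℝ a x) (hb : DifferentiableAt ℝ b x) :
    pd i (fun y => a y * b y) x = a x * pd i b x + pd i a x * b x := by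
  unfold pd
  rw [fderiv_fun_mul ha hb]
  simp [mul_comm]

theorem pd_exp {n : ℕ} (i : Fin n) {a : EuclideanSpace ℝ (Fin n) → ℝ} {x : EuclideanSpace ℝ (Fin n)}
    (ha : DifferentiableAt ℝ a x) :
    pd i (fun y => exp (a y)) x = exp (a x) * pd i a x := by
  unfold pd
  rw [fderiv_exp ha]
  simp

theorem pd_neg {n : ℕ} (i : Fin n) (a : EuclideanSpace ℝ (Fin n) → ℝ) (x : EuclideanSpace ℝ (Fin n)) :
    pd i (fun y => - a y) x = - pd i a x := by
  unfold pd
  rw [fderiv_fun_neg]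
  simp

theorem pd_add {n : ℕ} (i : Fin n) {a b : EuclideanSpace ℝ (Fin n) → ℝ} {x : EuclideanSpace ℝ (Fin n)}
    (ha : DifferentiableAt ℝ a x) (hb : DifferentiableAt ℝ b x) :
    pd i (fun y => a y + b y) x = pd i a x + pd i b x := by
  unfold pd
  rw [fderiv_fun_add ha hb]
  simp

theorem pd_pd {n : ℕ} (i j : Fin n) {a : EuclideanSpace ℝ (Fin n) → ℝ} (ha : ContDiff ℝ 2 a)
    (x : EuclideanSpace ℝ (Fin n)) :
    pd i (pd j a) x = fderiv ℝ (fderiv ℝ a) x (EuclideanSpace.single i (1:ℝ))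
      (EuclideanSpace.single j (1:ℝ)) := by
  have hd : DifferentiableAt ℝ (fderiv ℝ a) x :=
    (ha.fderiv_right (m := 1) (by norm_num)).differentiable (by norm_num) x
  have := fderiv_clm_apply hd (differentiableAt_const (EuclideanSpace.single j (1:ℝ)))
  show fderiv ℝ (fun y => fderiv ℝ a y (EuclideanSpace.single j (1:ℝ))) x _ = _
  rw [this]
  simp

theorem pd_comm {n : ℕ} (i j : Fin n) {a : EuclideanSpace ℝ (Fin n) → ℝ} (ha : ContDiff ℝ 2 a)
    (x : EuclideanSpace ℝ (Fin n)) : pd i (pd j a) x = pd j (pd i a) x := by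
  rw [pd_pd i j ha, pd_pd j i ha]
  have : IsSymmSndFDerivAt ℝ a x := ha.contDiffAt.isSymmSndFDerivAt (by simp)
  exact this.eq _ _

theorem ibp0 {n : ℕ} (i : Fin n) {u F : EuclideanSpace ℝ (Fin n) → ℝ} (hu : ContDiff ℝ 1 u)
    (hF : ContDiff ℝ 1 F) (hFc : HasCompactSupport F) :
    ∫ x, F x * pd i u x = - ∫ x, pd i F x * u x := by
  apply integral_mul_fderiv_eq_neg_fderiv_mul_of_integrable
  · exact cpt_int volume ((pd_cont i hF).mul hu.continuous) (pd_supp i hFc).mul_right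
  · exact cpt_int volume (hF.continuous.mul (pd_cont i hu)) hFc.mul_right
  · exact cpt_int volume (hF.continuous.mul hu.continuous) hFc.mul_right
  · exact fun x _ => hF.differentiable (by norm_num) x
  · exact fun x _ => hu.differentiable (by norm_num) x

/-- adjoint of the partial derivative -/
noncomputable def Da {n : ℕ} (V : EuclideanSpace ℝ (Fin n) → ℝ) (i : Fin n)
    (F : EuclideanSpace ℝ (Fin n) → ℝ) (x : EuclideanSpace ℝ (Fin n)) : ℝ :=
  - pd i F x + pd i V x * F x

theorem int_mu {n : ℕ} {V : EuclideanSpace ℝ (Fin n) → ℝ} (hV : ContDiff ℝ 2 V)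
    {μ : Measure (EuclideanSpace ℝ (Fin n))}
    (hμ : μ = volume.withDensity (fun x => ENNReal.ofReal (exp (-V x))))
    (F : EuclideanSpace ℝ (Fin n) → ℝ) : ∫ x, F x ∂μ = ∫ x, exp (-V x) * F x := by
  have hm : Measurable (fun x => ENNReal.ofReal (exp (-V x))) :=
    (hV.continuous.neg.rexp).measurable.ennreal_ofReal
  rw [hμ, integral_withDensity_eq_integral_toReal_smul hm (ae_of_all _ fun _ => ENNReal.ofReal_lt_top)]
  simp [ENNReal.toReal_ofReal (exp_pos _).le]

theorem Da_cont {n : ℕ} {V : EuclideanSpace ℝ (Fin n) → ℝ} (hV : ContDiff ℝ 2 V) (i : Fin n)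
    {F : EuclideanSpace ℝ (Fin n) → ℝ} (hF : ContDiff ℝ 1 F) : Continuous (Da V i F) :=
  (pd_cont i hF).neg.add ((pd_cd i hV).continuous.mul hF.continuous)

theorem Da_cd {n : ℕ} {V : EuclideanSpace ℝ (Fin n) → ℝ} (hV : ContDiff ℝ 2 V) (i : Fin n)
    {F : EuclideanSpace ℝ (Fin n) → ℝ} (hF : ContDiff ℝ 2 F) : ContDiff ℝ 1 (Da V i F) :=
  (pd_cd i hF).neg.add ((pd_cd i hV).mul (hF.of_le (by norm_num)))

theorem Da_supp {n : ℕ} (V : EuclideanSpace ℝ (Fin n) → ℝ) (i : Fin n)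
    {F : EuclideanSpace ℝ (Fin n) → ℝ} (hF : HasCompactSupport F) : HasCompactSupport (Da V i F) :=
  (pd_supp i hF).neg.add hF.mul_left

theorem ibp {n : ℕ} {V : EuclideanSpace ℝ (Fin n) → ℝ} (hV : ContDiff ℝ 2 V)
    {μ : Measure (EuclideanSpace ℝ (Fin n))}
    (hμ : μ = volume.withDensity (fun x => ENNReal.ofReal (exp (-V x))))
    (i : Fin n) {u F : EuclideanSpace ℝ (Fin n) → ℝ} (hu : ContDiff ℝ 1 u)
    (hF : ContDiff ℝ 1 F) (hFc : HasCompactSupport F) :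
    ∫ x, pd i u x * F x ∂μ = ∫ x, u x * Da V i F x ∂μ := by
  rw [int_mu hV hμ, int_mu hV hμ]
  have hV1 : ContDiff ℝ 1 V := hV.of_le (by norm_num)
  have h := ibp0 (F := fun x => exp (-V x) * F x) i hu (hV1.neg.exp.mul hF) hFc.mul_left
  rw [← integral_neg] at h
  convert h using 1
  · congr 1; ext x; ring
  · congr 1; ext x
    rw [pd_mul, pd_exp, pd_neg]
    · unfold Da; ring
    · exact hV1.neg.differentiable (by norm_num) x
    · exact hV1.neg.exp.differentiable (by norm_num) x
    · exact hF.differentiable (by norm_num) x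

theorem bochner_ij {n : ℕ} {V : EuclideanSpace ℝ (Fin n) → ℝ} (hV : ContDiff ℝ 2 V)
    {μ : Measure (EuclideanSpace ℝ (Fin n))} [IsFiniteMeasureOnCompacts μ]
    (hμ : μ = volume.withDensity (fun x => ENNReal.ofReal (exp (-V x))))
    (i j : Fin n) {a b : EuclideanSpace ℝ (Fin n) → ℝ} (ha : ContDiff ℝ 2 a)
    (hb : ContDiff ℝ 2 b) (hac : HasCompactSupport a) (hbc : HasCompactSupport b) :
    ∫ x, Da V i a x * Da V j b x ∂μ = ∫ x, pd j a x * pd i b x ∂μ +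
      ∫ x, pd i (pd j V) x * (a x * b x) ∂μ := by
  have ha1 : ContDiff ℝ 1 a := ha.of_le (by norm_num)
  have hb1 : ContDiff ℝ 1 b := hb.of_le (by norm_num)
  have h1 := ibp hV hμ i (u := Da V j b) (Da_cd hV j hb) ha1 hac
  have h2 := ibp hV hμ j (u := a) ha1 (pd_cd i hb) (pd_supp i hbc)
  rw [h2]
  have h3 : ∀ x, Da V i a x * Da V j b x = Da V j b x * Da V i a x := fun x => mul_comm _ _
  simp_rw [h3]
  rw [← h1, ← integral_add]
  · congr 1; ext x
    have : pd i (Da V j b) x = Da V j (pd i b) x + pd i (pd j V) x * b x := by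
      unfold Da
      rw [pd_add, pd_neg, pd_mul, pd_comm i j hb]
      · ring
      · exact (pd_cd j hV).differentiable (by norm_num) x
      · exact hb1.differentiable (by norm_num) x
      · exact (pd_cd j hb).neg.differentiable (by norm_num) x
      · exact ((pd_cd j hV).mul hb1).differentiable (by norm_num) x
    rw [this]; ring
  · exact cpt_int μ (ha.continuous.mul (Da_cont hV j (pd_cd i hb))) hac.mul_right
  · exact cpt_int μ ((pd_cont i (pd_cd j hV)).mul (ha.continuous.mul hb.continuous)) hac.mul_right.mul_left

theorem hess_sum {n : ℕ} {V : EuclideanSpace ℝ (Fin n) → ℝ} (hV : ContDiff ℝ 2 V)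
    (x v : EuclideanSpace ℝ (Fin n)) :
    iteratedFDeriv ℝ 2 V x ![v, v] = ∑ i, ∑ j, pd i (pd j V) x * (v i * v j) := by
  rw [iteratedFDeriv_two_apply]
  have hv : v = ∑ i, v i • EuclideanSpace.single i (1:ℝ) := by
    ext k
    simp [Finset.sum_apply, Pi.single_apply]
  simp_rw [pd_pd _ _ hV]
  simp only [Matrix.cons_val_zero, Matrix.cons_val_one]
  conv_lhs => rw [hv]
  simp only [map_sum, map_smul, sum_apply, smul_apply, smul_eq_mul]
  simp_rw [Finset.mul_sum]
  rw [Finset.sum_comm]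
  refine Finset.sum_congr rfl fun i _ => Finset.sum_congr rfl fun j _ => by ring

/-- Bochner-type inequality -/
theorem bochner {n : ℕ} {V ρ : EuclideanSpace ℝ (Fin n) → ℝ} (hV : ContDiff ℝ 2 V)
    {μ : Measure (EuclideanSpace ℝ (Fin n))} [IsFiniteMeasureOnCompacts μ]
    (hμ : μ = volume.withDensity (fun x => ENNReal.ofReal (exp (-V x))))
    (hρcont : Continuous ρ)
    (hHess : ∀ x u, ρ x * ‖u‖ ^ 2 ≤ iteratedFDeriv ℝ 2 V x ![u, u])
    (X : Fin n → EuclideanSpace ℝ (Fin n) → ℝ) (hX : ∀ i, ContDiff ℝ 2 (X i))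
    (hXc : ∀ i, HasCompactSupport (X i)) :
    ∫ x, ∑ i, ∑ j, pd j (X i) x ^ 2 ∂μ + ∫ x, ρ x * ∑ i, X i x ^ 2 ∂μ ≤
      ∫ x, (∑ i, Da V i (X i) x) ^ 2 ∂μ +
      ∫ x, (1 / 2) * ∑ i, ∑ j, (pd j (X i) x - pd i (X j) x) ^ 2 ∂μ := by
  have hX1 : ∀ i, ContDiff ℝ 1 (X i) := fun i => (hX i).of_le (by norm_num)
  have i1 : ∀ i j, Integrable (fun x => Da V i (X i) x * Da V j (X j) x) μ := fun i j =>
    cpt_int μ ((Da_cont hV i (hX1 i)).mul (Da_cont hV j (hX1 j))) (Da_supp V i (hXc i)).mul_right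
  have i2 : ∀ i j, Integrable (fun x => pd j (X i) x * pd i (X j) x) μ := fun i j =>
    cpt_int μ ((pd_cont j (hX1 i)).mul (pd_cont i (hX1 j))) (pd_supp j (hXc i)).mul_right
  have i3 : ∀ i j, Integrable (fun x => pd i (pd j V) x * (X i x * X j x)) μ := fun i j =>
    cpt_int μ ((pd_cont i (pd_cd j hV)).mul ((hX i).continuous.mul (hX j).continuous)) (hXc i).mul_right.mul_left
  have i4 : ∀ i j, Integrable (fun x => pd j (X i) x ^ 2) μ := fun i j =>
    cpt_int μ ((pd_cont j (hX1 i)).pow 2)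
        ((pd_supp j (hXc i)).comp_left (g := fun t : ℝ => t ^ 2) (by simp))
  have i5 : Integrable (fun x => ρ x * ∑ i, X i x ^ 2) μ := by
    have : (fun x => ρ x * ∑ i, X i x ^ 2) = fun x => ∑ i, ρ x * X i x ^ 2 := by
      ext x; rw [Finset.mul_sum]
    rw [this]
    exact integrable_finsetSum _ fun i _ => cpt_int μ (hρcont.mul ((hX i).continuous.pow 2))
      ((hXc i).comp_left (g := fun t : ℝ => t ^ 2) (by simp)).mul_left
  have i6 : ∀ i j, Integrable (fun x => (pd j (X i) x - pd i (X j) x) ^ 2) μ := fun i j =>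
    cpt_int μ (((pd_cont j (hX1 i)).sub (pd_cont i (hX1 j))).pow 2)
        (((pd_supp j (hXc i)).sub (pd_supp i (hXc j))).comp_left (g := fun t : ℝ => t ^ 2) (by simp))
  have i23 : ∀ i j, Integrable (fun x => pd j (X i) x * pd i (X j) x +
      pd i (pd j V) x * (X i x * X j x)) μ := fun i j => (i2 i j).add (i3 i j)
  have e1 : ∫ x, (∑ i, Da V i (X i) x) ^ 2 ∂μ =
      ∫ x, ∑ i, ∑ j, (pd j (X i) x * pd i (X j) x + pd i (pd j V) x * (X i x * X j x)) ∂μ := by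
    simp_rw [sq, Finset.sum_mul_sum]
    rw [integral_finsetSum _ fun i _ => integrable_finsetSum _ fun j _ => i1 i j,
      integral_finsetSum _ fun i _ => integrable_finsetSum _ fun j _ => i23 i j]
    refine Finset.sum_congr rfl fun i _ => ?_
    rw [integral_finsetSum _ fun j _ => i1 i j,
      integral_finsetSum _ fun j _ => i23 i j]
    refine Finset.sum_congr rfl fun j _ => ?_
    rw [integral_add (i2 i j) (i3 i j)]
    exact bochner_ij hV hμ i j (hX i) (hX j) (hXc i) (hXc j)
  have I4 : Integrable (fun x => ∑ i, ∑ j, pd j (X i) x ^ 2) μ :=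
    integrable_finsetSum _ fun i _ => integrable_finsetSum _ fun j _ => i4 i j
  have I23 : Integrable (fun x => ∑ i, ∑ j, (pd j (X i) x * pd i (X j) x + pd i (pd j V) x * (X i x * X j x))) μ :=
    integrable_finsetSum _ fun i _ => integrable_finsetSum _ fun j _ => (i2 i j).add (i3 i j)
  have I6 : Integrable (fun x => (1 / 2) * ∑ i, ∑ j, (pd j (X i) x - pd i (X j) x) ^ 2) μ :=
    (integrable_finsetSum _ fun i _ => integrable_finsetSum _ fun j _ => i6 i j).const_mul _
  rw [e1, ← integral_add I4 i5, ← integral_add I23 I6]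
  refine integral_mono (I4.add i5) (I23.add I6) fun x => ?_
  have hh := hHess x (WithLp.toLp 2 fun i => X i x)
  rw [hess_sum hV, EuclideanSpace.norm_sq_eq] at hh
  simp only [Real.norm_eq_abs, sq_abs] at hh
  have hsum : ∑ i, ∑ j, (pd j (X i) x - pd i (X j) x) ^ 2 =
      2 * ∑ i, ∑ j, pd j (X i) x ^ 2 - 2 * ∑ i, ∑ j, pd j (X i) x * pd i (X j) x := by
    have : ∑ i, ∑ j, pd i (X j) x ^ 2 = ∑ i, ∑ j, pd j (X i) x ^ 2 := Finset.sum_comm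
    calc _ = ∑ i, ∑ j, (pd j (X i) x ^ 2 + pd i (X j) x ^ 2 - 2 * (pd j (X i) x * pd i (X j) x)) := by
          refine Finset.sum_congr rfl fun i _ => Finset.sum_congr rfl fun j _ => by ring
      _ = _ := by
          simp only [Finset.sum_sub_distrib, Finset.sum_add_distrib, this, ← Finset.mul_sum]
          ring
  rw [hsum]
  simp only [Finset.sum_add_distrib]
  linarith

theorem cs_aux {A : Type*} [MeasurableSpace A] (ν : Measure A) (a b : A → ℝ≥0∞) (ha : Measurable a)
    (hb : Measurable b) : (∫⁻ y, a y * b y ∂ν) ^ 2 ≤ (∫⁻ y, a y ∂ν) * ∫⁻ y, a y * b y ^ 2 ∂ν := by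
  have h := ENNReal.lintegral_mul_le_Lp_mul_Lq (ν.withDensity a) (Real.HolderConjugate.two_two)
    hb.aemeasurable (aemeasurable_const (b := (1:ℝ≥0∞)))
  simp only [Pi.mul_apply, mul_one, ENNReal.one_rpow, ENNReal.rpow_ofNat] at h
  rw [lintegral_withDensity_eq_lintegral_mul _ ha hb,
    lintegral_withDensity_eq_lintegral_mul _ ha (hb.pow_const 2),
    lintegral_withDensity_eq_lintegral_mul _ ha measurable_const] at h
  simp only [Pi.mul_apply, mul_one] at h
  calc (∫⁻ y, a y * b y ∂ν) ^ 2 ≤ _ := pow_le_pow_left₀ (by positivity) h 2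
    _ = _ := by
      rw [mul_pow, ← ENNReal.rpow_natCast, ← ENNReal.rpow_mul, ← ENNReal.rpow_natCast, ← ENNReal.rpow_mul]
      norm_num
      rw [mul_comm]

/-- weighted mollification -/
noncomputable def Mo {n : ℕ} (V : EuclideanSpace ℝ (Fin n) → ℝ) (μ : Measure (EuclideanSpace ℝ (Fin n)))
    (k F : EuclideanSpace ℝ (Fin n) → ℝ) (x : EuclideanSpace ℝ (Fin n)) : ℝ :=
  exp (V x) * ∫ y, k (x - y) * F y ∂μ

theorem Mo_bound {n : ℕ} {V : EuclideanSpace ℝ (Fin n) → ℝ} (hV : ContDiff ℝ 2 V)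
    {μ : Measure (EuclideanSpace ℝ (Fin n))}
    (hμ : μ = volume.withDensity (fun x => ENNReal.ofReal (exp (-V x))))
    {k F : EuclideanSpace ℝ (Fin n) → ℝ} (hk : Continuous k) (hk0 : ∀ x, 0 ≤ k x)
    (hk1 : ∫⁻ x, ENNReal.ofReal (k x) = 1) (hF : Measurable F) (w : ℝ)
    (hw : ∀ x y, k (x - y) ≠ 0 → F y ≠ 0 → V x - V y ≤ w) :
    ∫⁻ x, ENNReal.ofReal (Mo V μ k F x ^ 2) ∂μ ≤
      ENNReal.ofReal (exp w) * ∫⁻ x, ENNReal.ofReal (F x ^ 2) ∂μ := by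
  set d : EuclideanSpace ℝ (Fin n) → ℝ≥0∞ := fun x => ENNReal.ofReal (exp (-V x)) with hd
  have hdm : Measurable d := (hV.continuous.neg.rexp).measurable.ennreal_ofReal
  have hkm : Measurable (fun x => ENNReal.ofReal (k x)) := hk.measurable.ennreal_ofReal
  have hFe : Measurable (fun x => ‖F x‖ₑ) := hF.enorm
  have sq_e : ∀ t : ℝ, ENNReal.ofReal (t ^ 2) = ‖t‖ₑ ^ 2 := fun t => by
    rw [← sq_abs, ENNReal.ofReal_pow (abs_nonneg _), Real.enorm_eq_ofReal_abs]
  have hki : ∀ x, ∫⁻ y, ENNReal.ofReal (k (x - y)) = 1 := fun x => by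
    rw [← hk1]; exact lintegral_sub_left_eq_self (fun y => ENNReal.ofReal (k y)) x
  have hki' : ∀ y, ∫⁻ x, ENNReal.ofReal (k (x - y)) = 1 := fun y => by
    rw [← hk1]; exact lintegral_sub_right_eq_self (fun y => ENNReal.ofReal (k y)) y
  have hkxm : ∀ x, Measurable (fun y => ENNReal.ofReal (k (x - y))) := fun x =>
    hkm.comp (measurable_const.sub measurable_id)
  have p1 : ∀ x, d x * ENNReal.ofReal (Mo V μ k F x ^ 2) ≤
      ∫⁻ y, ENNReal.ofReal (k (x - y)) * (ENNReal.ofReal (exp w) * (d y * ‖F y‖ₑ ^ 2)) := by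
    intro x
    have h1 : ‖∫ y, k (x - y) * F y ∂μ‖ₑ ≤ ∫⁻ y, ENNReal.ofReal (k (x - y)) * (d y * ‖F y‖ₑ) := by
      refine (enorm_integral_le_lintegral_enorm _).trans (le_of_eq ?_)
      rw [hμ, lintegral_withDensity_eq_lintegral_mul _ hdm]
      · refine lintegral_congr fun y => ?_
        simp only [Pi.mul_apply, enorm_mul, Real.enorm_eq_ofReal (hk0 _)]
        ring
      · exact ((hk.measurable.comp (measurable_const.sub measurable_id)).mul hF).enorm
    have h2 := cs_aux volume (fun y => ENNReal.ofReal (k (x - y))) (fun y => d y * ‖F y‖ₑ) (hkxm x)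
      (hdm.mul hFe)
    rw [hki x, one_mul] at h2
    calc d x * ENNReal.ofReal (Mo V μ k F x ^ 2)
        = d x * (ENNReal.ofReal (exp (V x)) ^ 2 * ‖∫ y, k (x - y) * F y ∂μ‖ₑ ^ 2) := by
          rw [sq_e, Mo, enorm_mul, mul_pow, Real.enorm_eq_ofReal (exp_pos _).le]
      _ ≤ d x * (ENNReal.ofReal (exp (V x)) ^ 2 * ∫⁻ y, ENNReal.ofReal (k (x - y)) * (d y * ‖F y‖ₑ) ^ 2) := by
          gcongr
          exact (pow_le_pow_left₀ (by positivity) h1 2).trans h2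
      _ = ∫⁻ y, (d x * ENNReal.ofReal (exp (V x)) ^ 2) * (ENNReal.ofReal (k (x - y)) * (d y * ‖F y‖ₑ) ^ 2) := by
          rw [lintegral_const_mul, mul_assoc]
          exact (hkxm x).mul ((hdm.mul hFe).pow_const 2)
      _ ≤ _ := by
          refine lintegral_mono fun y => ?_
          by_cases hky : k (x - y) = 0
          · simp [hky]
          by_cases hFy : F y = 0
          · simp [hFy]
          have hww := hw x y hky hFy
          have h3 : d x * ENNReal.ofReal (exp (V x)) ^ 2 * d y ^ 2 ≤ ENNReal.ofReal (exp w) * d y := by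
            simp only [hd]
            rw [← ENNReal.ofReal_pow (exp_pos _).le, ← ENNReal.ofReal_pow (exp_pos _).le,
              ← ENNReal.ofReal_mul (by positivity), ← ENNReal.ofReal_mul (by positivity),
              ← ENNReal.ofReal_mul (by positivity)]
            apply ENNReal.ofReal_le_ofReal
            rw [sq, sq, ← exp_add, ← exp_add, ← exp_add, ← exp_add, ← exp_add]
            apply exp_le_exp.2
            linarith
          calc _ = (d x * ENNReal.ofReal (exp (V x)) ^ 2 * d y ^ 2) * (ENNReal.ofReal (k (x - y)) * ‖F y‖ₑ ^ 2) := by ring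
            _ ≤ (ENNReal.ofReal (exp w) * d y) * (ENNReal.ofReal (k (x - y)) * ‖F y‖ₑ ^ 2) := by gcongr
            _ = _ := by ring
  have hdF : Measurable (fun y => ENNReal.ofReal (exp w) * (d y * ‖F y‖ₑ ^ 2)) :=
    measurable_const.mul (hdm.mul (hFe.pow_const 2))
  have hlw : ∀ g : EuclideanSpace ℝ (Fin n) → ℝ≥0∞, ∫⁻ x, g x ∂μ ≤ ∫⁻ x, d x * g x := fun g => by
    rw [hμ]; exact lintegral_withDensity_le_lintegral_mul _ hdm _
  calc _ ≤ ∫⁻ x, d x * ENNReal.ofReal (Mo V μ k F x ^ 2) := hlw _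
    _ ≤ ∫⁻ x, ∫⁻ y, ENNReal.ofReal (k (x - y)) * (ENNReal.ofReal (exp w) * (d y * ‖F y‖ₑ ^ 2)) :=
        lintegral_mono p1
    _ = ∫⁻ y, ∫⁻ x, ENNReal.ofReal (k (x - y)) * (ENNReal.ofReal (exp w) * (d y * ‖F y‖ₑ ^ 2)) := by
        apply lintegral_lintegral_swap
        apply Measurable.aemeasurable
        exact (hkm.comp (measurable_fst.sub measurable_snd)).mul (hdF.comp measurable_snd)
    _ = ∫⁻ y, (ENNReal.ofReal (exp w) * (d y * ‖F y‖ₑ ^ 2)) := by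
        refine lintegral_congr fun y => ?_
        rw [lintegral_mul_const, hki', one_mul]
        exact hkm.comp (measurable_id.sub measurable_const)
    _ = _ := by
        have hdm2 : Measurable (fun y => d y * ‖F y‖ₑ ^ 2) := hdm.mul (hFe.pow_const 2)
        rw [lintegral_const_mul _ hdm2, hμ,
          lintegral_withDensity_eq_lintegral_mul _ hdm (hF.pow_const 2).ennreal_ofReal]
        simp only [Pi.mul_apply, sq_e]

theorem conv_integrable {n : ℕ} {V : EuclideanSpace ℝ (Fin n) → ℝ} (hV : ContDiff ℝ 2 V)
    {μ : Measure (EuclideanSpace ℝ (Fin n))}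
    (hμ : μ = volume.withDensity (fun x => ENNReal.ofReal (exp (-V x))))
    {F : EuclideanSpace ℝ (Fin n) → ℝ} (hF : Integrable F μ) :
    Integrable (fun x => exp (-V x) * F x) volume := by
  have hdm : Measurable (fun x => ENNReal.ofReal (exp (-V x))) :=
    (hV.continuous.neg.rexp).measurable.ennreal_ofReal
  rw [hμ, integrable_withDensity_iff hdm
    (ae_of_all _ fun _ => ENNReal.ofReal_lt_top)] at hF
  simpa [ENNReal.toReal_ofReal (exp_pos _).le, mul_comm] using hF

theorem conv_eq {n : ℕ} {V : EuclideanSpace ℝ (Fin n) → ℝ} (hV : ContDiff ℝ 2 V)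
    {μ : Measure (EuclideanSpace ℝ (Fin n))}
    (hμ : μ = volume.withDensity (fun x => ENNReal.ofReal (exp (-V x))))
    (k F : EuclideanSpace ℝ (Fin n) → ℝ) : (fun x => ∫ y, k (x - y) * F y ∂μ) =
      convolution k (fun x => exp (-V x) * F x) (ContinuousLinearMap.lsmul ℝ ℝ) volume := by
  ext x
  rw [convolution_eq_swap, int_mu hV hμ]
  congr 1; ext y
  simp; ring

theorem conv_cd {n : ℕ} {V : EuclideanSpace ℝ (Fin n) → ℝ} (hV : ContDiff ℝ 2 V)
    {μ : Measure (EuclideanSpace ℝ (Fin n))}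
    (hμ : μ = volume.withDensity (fun x => ENNReal.ofReal (exp (-V x))))
    {k F : EuclideanSpace ℝ (Fin n) → ℝ} (hk : ContDiff ℝ 2 k) (hkc : HasCompactSupport k)
    (hF : Integrable F μ) : ContDiff ℝ 2 (fun x => ∫ y, k (x - y) * F y ∂μ) := by
  rw [conv_eq hV hμ]
  exact hkc.contDiff_convolution_left _ hk (conv_integrable hV hμ hF).locallyIntegrable

theorem conv_supp {n : ℕ} {V : EuclideanSpace ℝ (Fin n) → ℝ} (hV : ContDiff ℝ 2 V)
    {μ : Measure (EuclideanSpace ℝ (Fin n))}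
    (hμ : μ = volume.withDensity (fun x => ENNReal.ofReal (exp (-V x))))
    {k F : EuclideanSpace ℝ (Fin n) → ℝ} (hkc : HasCompactSupport k)
    (hF : HasCompactSupport F) : HasCompactSupport (fun x => ∫ y, k (x - y) * F y ∂μ) := by
  rw [conv_eq hV hμ]
  exact HasCompactSupport.convolution _ hkc hF.mul_left

theorem conv_pd {n : ℕ} {V : EuclideanSpace ℝ (Fin n) → ℝ} (hV : ContDiff ℝ 2 V)
    {μ : Measure (EuclideanSpace ℝ (Fin n))}
    (hμ : μ = volume.withDensity (fun x => ENNReal.ofReal (exp (-V x))))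
    {k F : EuclideanSpace ℝ (Fin n) → ℝ} (hk : ContDiff ℝ 2 k) (hkc : HasCompactSupport k)
    (hF : Integrable F μ) (j : Fin n) (x : EuclideanSpace ℝ (Fin n)) :
    pd j (fun x => ∫ y, k (x - y) * F y ∂μ) x = ∫ y, pd j k (x - y) * F y ∂μ := by
  have hk1 : ContDiff ℝ 1 k := hk.of_le (by norm_num)
  have hli := (conv_integrable hV hμ hF).locallyIntegrable
  have h := hkc.hasFDerivAt_convolution_left (ContinuousLinearMap.lsmul ℝ ℝ) hk1 hli x
  rw [conv_eq hV hμ]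
  unfold pd
  rw [h.fderiv, convolution_eq_swap, int_mu hV hμ]
  rw [ContinuousLinearMap.integral_apply]
  · congr 1; ext y
    simp [ContinuousLinearMap.precompL_apply]; ring
  · have := (hkc.fderiv ℝ).convolutionExists_left
      ((ContinuousLinearMap.lsmul ℝ ℝ).precompL (EuclideanSpace ℝ (Fin n))) (hk1.continuous_fderiv (by norm_num)) hli x
    exact this.integrable_swap

theorem Mo_cont {n : ℕ} {V : EuclideanSpace ℝ (Fin n) → ℝ} (hV : ContDiff ℝ 2 V)
    {μ : Measure (EuclideanSpace ℝ (Fin n))}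
    (hμ : μ = volume.withDensity (fun x => ENNReal.ofReal (exp (-V x))))
    {k F : EuclideanSpace ℝ (Fin n) → ℝ} (hk : ContDiff ℝ 2 k) (hkc : HasCompactSupport k)
    (hF : Integrable F μ) : Continuous (Mo V μ k F) :=
  hV.continuous.rexp.mul (conv_cd hV hμ hk hkc hF).continuous

theorem Mo_bound' {n : ℕ} {V : EuclideanSpace ℝ (Fin n) → ℝ} (hV : ContDiff ℝ 2 V)
    {μ : Measure (EuclideanSpace ℝ (Fin n))} [IsProbabilityMeasure μ]
    (hμ : μ = volume.withDensity (fun x => ENNReal.ofReal (exp (-V x))))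
    {k F : EuclideanSpace ℝ (Fin n) → ℝ} (hk : ContDiff ℝ 2 k) (hkc : HasCompactSupport k)
    (hk0 : ∀ x, 0 ≤ k x)
    (hk1 : ∫⁻ x, ENNReal.ofReal (k x) = 1) (hF : Measurable F) (hF2 : MemLp F 2 μ) (w : ℝ)
    (hw : ∀ x y, k (x - y) ≠ 0 → F y ≠ 0 → V x - V y ≤ w) :
    Integrable (fun x => Mo V μ k F x ^ 2) μ ∧
    ∫ x, Mo V μ k F x ^ 2 ∂μ ≤ exp w * ∫ x, F x ^ 2 ∂μ := by
  have h := Mo_bound hV hμ hk.continuous hk0 hk1 hF w hw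
  have hFi : Integrable F μ := hF2.integrable (by norm_num)
  have hFs : Integrable (fun x => F x ^ 2) μ := hF2.integrable_sq
  rw [← ofReal_integral_eq_lintegral_ofReal hFs (ae_of_all _ fun _ => sq_nonneg _),
    ← ENNReal.ofReal_mul (exp_pos _).le] at h
  have hc := (Mo_cont hV hμ hk hkc hFi).pow 2
  have hint : Integrable (fun x => Mo V μ k F x ^ 2) μ := by
    refine ⟨hc.aestronglyMeasurable, ?_⟩
    rw [hasFiniteIntegral_iff_ofReal (ae_of_all _ fun _ => sq_nonneg _)]
    exact h.trans_lt ENNReal.ofReal_lt_top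
  refine ⟨hint, ?_⟩
  rw [← ofReal_integral_eq_lintegral_ofReal hint (ae_of_all _ fun _ => sq_nonneg _)] at h
  exact (ENNReal.ofReal_le_ofReal_iff (mul_nonneg (exp_pos _).le (integral_nonneg fun _ => sq_nonneg _))).1 h

theorem fatou_real {A : Type*} [MeasurableSpace A] (ν : Measure A) (f : ℕ → A → ℝ) (g : A → ℝ)
    (hf : ∀ k, Integrable (f k) ν) (hf0 : ∀ k x, 0 ≤ f k x) (hg : Integrable g ν) (hg0 : ∀ x, 0 ≤ g x)
    (hlim : ∀ᵐ x ∂ν, Filter.Tendsto (fun k => f k x) Filter.atTop (nhds (g x)))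
    (C : ℝ) (hC : ∀ᶠ k in Filter.atTop, ∫ x, f k x ∂ν ≤ C) : ∫ x, g x ∂ν ≤ C := by
  have hC0 : 0 ≤ C := by
    obtain ⟨k, hk⟩ := hC.exists
    exact (integral_nonneg (hf0 k)).trans hk
  have h1 : ∫⁻ x, ENNReal.ofReal (g x) ∂ν ≤ ENNReal.ofReal C := by
    calc ∫⁻ x, ENNReal.ofReal (g x) ∂ν =
        ∫⁻ x, Filter.liminf (fun k => ENNReal.ofReal (f k x)) Filter.atTop ∂ν := by
          apply lintegral_congr_ae
          filter_upwards [hlim] with x hx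
          exact ((ENNReal.continuous_ofReal.tendsto _).comp hx).liminf_eq.symm
      _ ≤ Filter.liminf (fun k => ∫⁻ x, ENNReal.ofReal (f k x) ∂ν) Filter.atTop :=
          lintegral_liminf_le' fun k => (hf k).1.aemeasurable.ennreal_ofReal
      _ ≤ Filter.liminf (fun _ : ℕ => ENNReal.ofReal C) Filter.atTop := by
          refine Filter.liminf_le_liminf ?_
          filter_upwards [hC] with k hk
          rw [← ofReal_integral_eq_lintegral_ofReal (hf k) (ae_of_all _ (hf0 k))]
          exact ENNReal.ofReal_le_ofReal hk
      _ = ENNReal.ofReal C := by simp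
  rw [← ofReal_integral_eq_lintegral_ofReal hg (ae_of_all _ hg0)] at h1
  exact (ENNReal.ofReal_le_ofReal_iff hC0).1 h1

theorem memlp_mul {n : ℕ} {μ : Measure (EuclideanSpace ℝ (Fin n))}
    {a Y : EuclideanSpace ℝ (Fin n) → ℝ} (ha : Continuous a) (hac : HasCompactSupport a)
    (hY : MemLp Y 2 μ) : MemLp (fun x => a x * Y x) 2 μ := by
  obtain ⟨C, hC⟩ := ha.bounded_above_of_compact_support hac
  refine hY.of_le_mul (c := C) (ha.aestronglyMeasurable.mul hY.1) (ae_of_all _ fun x => ?_)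
  rw [norm_mul]
  gcongr
  exact hC x

theorem int_k {n : ℕ} {μ : Measure (EuclideanSpace ℝ (Fin n))}
    {a G : EuclideanSpace ℝ (Fin n) → ℝ} (ha : Continuous a) (hac : HasCompactSupport a)
    (hG : Integrable G μ) (x : EuclideanSpace ℝ (Fin n)) : Integrable (fun y => a (x - y) * G y) μ := by
  obtain ⟨C, hC⟩ := ha.bounded_above_of_compact_support hac
  exact hG.bdd_mul (c := C) (ha.comp (continuous_const.sub continuous_id)).aestronglyMeasurable
    (ae_of_all _ fun y => hC _)

theorem pd_sub_left {n : ℕ} (j : Fin n) {k : EuclideanSpace ℝ (Fin n) → ℝ} (hk : ContDiff ℝ 2 k)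
    (x y : EuclideanSpace ℝ (Fin n)) : pd j (fun z => k (x - z)) y = - pd j k (x - y) := by
  unfold pd
  have h1 : HasFDerivAt (fun z : EuclideanSpace ℝ (Fin n) => x - z)
      (- ContinuousLinearMap.id ℝ (EuclideanSpace ℝ (Fin n))) y := (hasFDerivAt_id y).const_sub x
  have h2 := (hk.differentiable (by norm_num) (x - y)).hasFDerivAt
  have h3 : HasFDerivAt (fun z => k (x - z)) _ y := h2.comp y h1
  rw [h3.fderiv]
  simp

section
variable {n : ℕ} {V : EuclideanSpace ℝ (Fin n) → ℝ} (hV : ContDiff ℝ 2 V)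
    {μ : Measure (EuclideanSpace ℝ (Fin n))} [IsProbabilityMeasure μ]
    (hμ : μ = volume.withDensity (fun x => ENNReal.ofReal (exp (-V x))))
    {k χ : EuclideanSpace ℝ (Fin n) → ℝ} (hk : ContDiff ℝ 2 k) (hkc : HasCompactSupport k)
    (hχ : ContDiff ℝ 2 χ) (hχc : HasCompactSupport χ)
    {Y : Fin n → EuclideanSpace ℝ (Fin n) → ℝ} {h : EuclideanSpace ℝ (Fin n) → ℝ}
    (hY : ∀ i, MemLp (Y i) 2 μ) (hh : MemLp h 2 μ)

theorem th_pd (hk : ContDiff ℝ 2 k) (hχ : ContDiff ℝ 2 χ) (j : Fin n) (x y : EuclideanSpace ℝ (Fin n)) :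
    pd j (fun z => k (x - z) * χ z) y = k (x - y) * pd j χ y - pd j k (x - y) * χ y := by
  rw [pd_mul, pd_sub_left j hk]
  · ring
  · exact (hk.comp (contDiff_const.sub contDiff_id)).differentiable (by norm_num) y
  · exact hχ.differentiable (by norm_num) y

theorem Mo_pd (hV : ContDiff ℝ 2 V)
    (hμ : μ = volume.withDensity (fun x => ENNReal.ofReal (exp (-V x))))
    (hk : ContDiff ℝ 2 k) (hkc : HasCompactSupport k) {F : EuclideanSpace ℝ (Fin n) → ℝ}
    (hF : Integrable F μ) (j : Fin n) (x : EuclideanSpace ℝ (Fin n)) :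
    pd j (Mo V μ k F) x = exp (V x) * (∫ y, pd j k (x - y) * F y ∂μ) + pd j V x * Mo V μ k F x := by
  show pd j (fun x => exp (V x) * ∫ y, k (x - y) * F y ∂μ) x = _
  rw [pd_mul j (hV.exp.differentiable (by norm_num) x)
    ((conv_cd hV hμ hk hkc hF).differentiable (by norm_num) x), conv_pd hV hμ hk hkc hF,
    pd_exp j (hV.differentiable (by norm_num) x), Mo]
  ring

theorem dstar_eq (hV : ContDiff ℝ 2 V)
    (hμ : μ = volume.withDensity (fun x => ENNReal.ofReal (exp (-V x))))
    (hk : ContDiff ℝ 2 k) (hkc : HasCompactSupport k)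
    (hχ : ContDiff ℝ 2 χ) (hχc : HasCompactSupport χ)
    (hY : ∀ i, MemLp (Y i) 2 μ) (hh : MemLp h 2 μ)
    (hdiv : ∀ u, ContDiff ℝ 2 u → HasCompactSupport u →
      ∫ x, ∑ i, pd i u x * Y i x ∂μ = ∫ x, u x * h x ∂μ) (x : EuclideanSpace ℝ (Fin n)) :
    ∑ i, Da V i (Mo V μ k (fun y => χ y * Y i y)) x =
      Mo V μ k (fun y => χ y * h y - ∑ i, pd i χ y * Y i y) x := by
  have hχ1 : ContDiff ℝ 1 χ := hχ.of_le (by norm_num)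
  have hk1 : ContDiff ℝ 1 k := hk.of_le (by norm_num)
  have hi1 : ∀ i, Integrable (fun y => χ y * Y i y) μ := fun i =>
    (memlp_mul hχ.continuous hχc (hY i)).integrable (by norm_num)
  have hi2 : Integrable (fun y => χ y * h y) μ :=
    (memlp_mul hχ.continuous hχc hh).integrable (by norm_num)
  have hi3 : ∀ i, Integrable (fun y => pd i χ y * Y i y) μ := fun i =>
    (memlp_mul (pd_cont i hχ1) (pd_supp i hχc) (hY i)).integrable (by norm_num)
  have hi4 : Integrable (fun y => ∑ i, pd i χ y * Y i y) μ := integrable_finsetSum _ fun i _ => hi3 i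
  have hd := hdiv (fun z => k (x - z) * χ z) ((hk.comp (contDiff_const.sub contDiff_id)).mul hχ) hχc.mul_left
  simp_rw [th_pd hk hχ] at hd
  have e1 : ∫ y, ∑ i, (k (x - y) * pd i χ y - pd i k (x - y) * χ y) * Y i y ∂μ =
      ∫ y, k (x - y) * ∑ i, pd i χ y * Y i y ∂μ - ∑ i, ∫ y, pd i k (x - y) * (χ y * Y i y) ∂μ := by
    rw [← integral_finsetSum, ← integral_sub]
    · congr 1; ext y
      rw [Finset.mul_sum, ← Finset.sum_sub_distrib]
      exact Finset.sum_congr rfl fun i _ => by ring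
    · exact int_k hk.continuous hkc hi4 x
    · exact integrable_finsetSum _ fun i _ => int_k (pd_cont i hk1) (pd_supp i hkc) (hi1 i) x
    · exact fun i _ => int_k (pd_cont i hk1) (pd_supp i hkc) (hi1 i) x
  have e2 : Mo V μ k (fun y => χ y * h y - ∑ i, pd i χ y * Y i y) x =
      exp (V x) * (∫ y, (k (x - y) * χ y) * h y ∂μ - ∫ y, k (x - y) * ∑ i, pd i χ y * Y i y ∂μ) := by
    unfold Mo
    rw [← integral_sub]
    · congr 2; ext y; ring
    · simpa [mul_assoc] using int_k hk.continuous hkc hi2 x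
    · exact int_k hk.continuous hkc hi4 x
  rw [e2, ← hd, e1]
  have e3 : ∀ i, Da V i (Mo V μ k (fun y => χ y * Y i y)) x =
      - (exp (V x) * ∫ y, pd i k (x - y) * (χ y * Y i y) ∂μ) := fun i => by
    unfold Da
    rw [Mo_pd hV hμ hk hkc (hi1 i)]
    ring
  simp_rw [e3, Finset.sum_neg_distrib, ← Finset.mul_sum]
  ring

theorem curl_le (hV : ContDiff ℝ 2 V)
    (hμ : μ = volume.withDensity (fun x => ENNReal.ofReal (exp (-V x))))
    (hk : ContDiff ℝ 2 k) (hkc : HasCompactSupport k) (hk0 : ∀ x, 0 ≤ k x)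
    (hχ : ContDiff ℝ 2 χ) (hχc : HasCompactSupport χ)
    (hY : ∀ i, MemLp (Y i) 2 μ)
    (hcurl : ∀ u, ContDiff ℝ 2 u → HasCompactSupport u → ∀ i j,
      ∫ x, Da V j u x * Y i x ∂μ = ∫ x, Da V i u x * Y j x ∂μ) (η : ℝ)
    (hη : ∀ x y, k (x - y) ≠ 0 → χ y ≠ 0 → ∀ j, |pd j V x - pd j V y| ≤ η)
    (x : EuclideanSpace ℝ (Fin n)) (i j : Fin n) :
    (pd j (Mo V μ k (fun y => χ y * Y i y)) x - pd i (Mo V μ k (fun y => χ y * Y j y)) x) ^ 2 ≤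
      3 * (Mo V μ k (fun y => pd j χ y * Y i y - pd i χ y * Y j y) x ^ 2 +
      η ^ 2 * (Mo V μ k (fun y => |χ y * Y i y|) x ^ 2 + Mo V μ k (fun y => |χ y * Y j y|) x ^ 2)) := by
  have hχ1 : ContDiff ℝ 1 χ := hχ.of_le (by norm_num)
  have hk1 : ContDiff ℝ 1 k := hk.of_le (by norm_num)
  have hi1 : ∀ i, Integrable (fun y => χ y * Y i y) μ := fun i =>
    (memlp_mul hχ.continuous hχc (hY i)).integrable (by norm_num)
  have hi3 : ∀ i j, Integrable (fun y => pd j χ y * Y i y) μ := fun i j =>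
    (memlp_mul (pd_cont j hχ1) (pd_supp j hχc) (hY i)).integrable (by norm_num)
  have hi5 : ∀ i j, Integrable (fun y => pd j V y * (χ y * Y i y)) μ := fun i j => by
    have := (memlp_mul ((pd_cd j hV).continuous.mul hχ.continuous) (hχc.mul_left) (hY i)).integrable (by norm_num)
    simpa [mul_assoc] using this
  -- expansions
  have e1 : ∀ i j, ∫ y, Da V j (fun z => k (x - z) * χ z) y * Y i y ∂μ =
      ∫ y, pd j k (x - y) * (χ y * Y i y) ∂μ - ∫ y, k (x - y) * (pd j χ y * Y i y) ∂μ
      + ∫ y, k (x - y) * (pd j V y * (χ y * Y i y)) ∂μ := fun i j => by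
    have a1 := int_k (pd_cont j hk1) (pd_supp j hkc) (hi1 i) x
    have a2 := int_k hk.continuous hkc (hi3 i j) x
    have a3 := int_k hk.continuous hkc (hi5 i j) x
    have a12 : Integrable (fun y => pd j k (x - y) * (χ y * Y i y) - k (x - y) * (pd j χ y * Y i y)) μ := a1.sub a2
    rw [← integral_sub a1 a2, ← integral_add a12 a3]
    congr 1; ext y
    unfold Da
    rw [th_pd hk hχ]
    ring
  have hc := hcurl (fun z => k (x - z) * χ z) ((hk.comp (contDiff_const.sub contDiff_id)).mul hχ) hχc.mul_left i j
  rw [e1 i j, e1 j i] at hc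
  set E : Fin n → Fin n → ℝ := fun i j => pd j V x * (∫ y, k (x - y) * (χ y * Y i y) ∂μ) -
    ∫ y, k (x - y) * (pd j V y * (χ y * Y i y)) ∂μ with hE
  have hEb : ∀ i j, |exp (V x) * E i j| ≤ η * Mo V μ k (fun y => |χ y * Y i y|) x := fun i j => by
    rw [abs_mul, abs_of_pos (exp_pos _), Mo, ← mul_assoc, mul_comm η, mul_assoc]
    refine mul_le_mul_of_nonneg_left ?_ (exp_pos _).le
    simp only [hE]
    have a1 := int_k hk.continuous hkc (hi1 i) x
    have a3 := int_k hk.continuous hkc (hi5 i j) x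
    rw [← integral_const_mul, ← integral_sub (a1.const_mul _) a3, ← integral_const_mul]
    refine (abs_integral_le_integral_abs).trans ?_
    refine integral_mono ((a1.const_mul _).sub a3).abs ((int_k hk.continuous hkc (hi1 i).abs x).const_mul _) fun y => ?_
    have : pd j V x * (k (x - y) * (χ y * Y i y)) - k (x - y) * (pd j V y * (χ y * Y i y)) =
      (pd j V x - pd j V y) * (k (x - y) * (χ y * Y i y)) := by ring
    simp only
    rw [this, abs_mul, abs_mul (k (x - y)), abs_of_nonneg (hk0 _)]
    by_cases h1 : k (x - y) = 0
    · simp [h1]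
    by_cases h2 : χ y = 0
    · simp [h2]
    exact mul_le_mul_of_nonneg_right (hη x y h1 h2 j) (mul_nonneg (hk0 _) (abs_nonneg _))
  have e4 : Mo V μ k (fun y => pd j χ y * Y i y - pd i χ y * Y j y) x =
      exp (V x) * (∫ y, k (x - y) * (pd j χ y * Y i y) ∂μ - ∫ y, k (x - y) * (pd i χ y * Y j y) ∂μ) := by
    rw [Mo, ← integral_sub (int_k hk.continuous hkc (hi3 i j) x) (int_k hk.continuous hkc (hi3 j i) x)]
    congr 2; ext y; ring
  have e5 : pd j (Mo V μ k (fun y => χ y * Y i y)) x - pd i (Mo V μ k (fun y => χ y * Y j y)) x =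
      Mo V μ k (fun y => pd j χ y * Y i y - pd i χ y * Y j y) x + exp (V x) * E i j - exp (V x) * E j i := by
    rw [Mo_pd hV hμ hk hkc (hi1 i), Mo_pd hV hμ hk hkc (hi1 j), e4]
    simp only [hE, Mo]
    linear_combination (exp (V x)) * hc
  rw [e5]
  have b1 := sq_le_sq' (abs_le.1 (hEb i j)).1 (abs_le.1 (hEb i j)).2
  have b2 := sq_le_sq' (abs_le.1 (hEb j i)).1 (abs_le.1 (hEb j i)).2
  rw [mul_pow η] at b1 b2
  generalize Mo V μ k (fun y => pd j χ y * Y i y - pd i χ y * Y j y) x = p at *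
  generalize exp (V x) * E i j = q at *
  generalize exp (V x) * E j i = s at *
  nlinarith [sq_nonneg (p - q), sq_nonneg (p + s), sq_nonneg (q + s)]
end

section
variable {n : ℕ} {V : EuclideanSpace ℝ (Fin n) → ℝ}
    {μ : Measure (EuclideanSpace ℝ (Fin n))} [IsProbabilityMeasure μ]
    {k χ : EuclideanSpace ℝ (Fin n) → ℝ}
    {Y : Fin n → EuclideanSpace ℝ (Fin n) → ℝ} {h : EuclideanSpace ℝ (Fin n) → ℝ}

theorem key1 (hV : ContDiff ℝ 2 V)
    (hμ : μ = volume.withDensity (fun x => ENNReal.ofReal (exp (-V x)))) (lam : ℝ)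
    (hB : ∀ X : Fin n → EuclideanSpace ℝ (Fin n) → ℝ, (∀ i, ContDiff ℝ 2 (X i)) →
      (∀ i, HasCompactSupport (X i)) → lam * ∫ x, ∑ i, X i x ^ 2 ∂μ ≤
      ∫ x, (∑ i, Da V i (X i) x) ^ 2 ∂μ +
        ∫ x, (1/2) * ∑ i, ∑ j, (pd j (X i) x - pd i (X j) x) ^ 2 ∂μ)
    (hk : ContDiff ℝ 2 k) (hkc : HasCompactSupport k) (hk0 : ∀ x, 0 ≤ k x)
    (hk1 : ∫⁻ x, ENNReal.ofReal (k x) = 1)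
    (hχ : ContDiff ℝ 2 χ) (hχc : HasCompactSupport χ)
    (hYm : ∀ i, Measurable (Y i)) (hhm : Measurable h)
    (hY : ∀ i, MemLp (Y i) 2 μ) (hh : MemLp h 2 μ)
    (hdiv : ∀ u, ContDiff ℝ 2 u → HasCompactSupport u →
      ∫ x, ∑ i, pd i u x * Y i x ∂μ = ∫ x, u x * h x ∂μ)
    (hcurl : ∀ u, ContDiff ℝ 2 u → HasCompactSupport u → ∀ i j,
      ∫ x, Da V j u x * Y i x ∂μ = ∫ x, Da V i u x * Y j x ∂μ) (η : ℝ)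
    (hη : ∀ x y, k (x - y) ≠ 0 → y ∈ tsupport χ →
      V x - V y ≤ η ∧ ∀ j, |pd j V x - pd j V y| ≤ η) :
    lam * ∫ x, ∑ i, Mo V μ k (fun y => χ y * Y i y) x ^ 2 ∂μ ≤
      exp η * (∫ x, (χ x * h x - ∑ i, pd i χ x * Y i x) ^ 2 ∂μ +
        3 / 2 * ∑ i, ∑ j, (∫ x, (pd j χ x * Y i x - pd i χ x * Y j x) ^ 2 ∂μ +
          η ^ 2 * (∫ x, (χ x * Y i x) ^ 2 ∂μ + ∫ x, (χ x * Y j x) ^ 2 ∂μ))) := by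
  have hχ1 : ContDiff ℝ 1 χ := hχ.of_le (by norm_num)
  have m1 : ∀ i, MemLp (fun y => χ y * Y i y) 2 μ := fun i => memlp_mul hχ.continuous hχc (hY i)
  have m2 : MemLp (fun y => χ y * h y) 2 μ := memlp_mul hχ.continuous hχc hh
  have m3 : ∀ i j, MemLp (fun y => pd j χ y * Y i y) 2 μ := fun i j =>
    memlp_mul (pd_cont j hχ1) (pd_supp j hχc) (hY i)
  have pdz : ∀ j y, y ∉ tsupport χ → pd j χ y = 0 := fun j y hy => by
    have : fderiv ℝ χ y = 0 := by
      by_contra hne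
      exact hy (support_fderiv_subset ℝ hne)
    simp [pd, this]
  have mb := fun (F : EuclideanSpace ℝ (Fin n) → ℝ) (hF : Measurable F) (hF2 : MemLp F 2 μ)
    (hz : ∀ y, y ∉ tsupport χ → F y = 0) => Mo_bound' hV hμ hk hkc hk0 hk1 hF hF2 η
      (fun x y h1 h2 => (hη x y h1 (by by_contra hc; exact h2 (hz y hc))).1)
  have z1 : ∀ y, y ∉ tsupport χ → χ y = 0 := fun y hy => image_eq_zero_of_notMem_tsupport hy
  have hpm : ∀ j, Measurable (pd j χ) := fun j => (pd_cont j hχ1).measurable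
  have hχm := hχ.continuous.measurable
  have b0 := mb (fun y => χ y * h y - ∑ i, pd i χ y * Y i y)
    ((hχm.mul hhm).sub (Finset.measurable_sum _ fun i _ => (hpm i).mul (hYm i)))
    (m2.sub (memLp_finsetSum _ fun i _ => m3 i i)) (fun y hy => by simp [z1 y hy, pdz _ y hy])
  have b1 := fun i j => mb (fun y => pd j χ y * Y i y - pd i χ y * Y j y)
    (((hpm j).mul (hYm i)).sub ((hpm i).mul (hYm j))) ((m3 i j).sub (m3 j i))
    (fun y hy => by simp [pdz _ y hy])
  have b2 := fun i => mb (fun y => |χ y * Y i y|) (hχm.mul (hYm i)).abs ((m1 i).abs)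
    (fun y hy => by simp [z1 y hy])
  simp only [sq_abs] at b2
  have hX1 : ∀ i, ContDiff ℝ 2 (Mo V μ k (fun y => χ y * Y i y)) := fun i =>
    hV.exp.mul (conv_cd hV hμ hk hkc ((m1 i).integrable (by norm_num)))
  have hX2 : ∀ i, HasCompactSupport (Mo V μ k (fun y => χ y * Y i y)) := fun i =>
    (conv_supp hV hμ hkc hχc.mul_right).mul_left
  have hb := hB _ hX1 hX2
  simp_rw [dstar_eq hV hμ hk hkc hχ hχc hY hh hdiv] at hb
  have hcl := fun x i j => curl_le hV hμ hk hkc hk0 hχ hχc hY hcurl η (fun x y h1 h2 =>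
    (hη x y h1 (subset_tsupport _ h2)).2) x i j
  refine hb.trans ?_
  rw [mul_add]
  refine add_le_add b0.2 ?_
  have i1 : ∀ i j, Integrable (fun x => Mo V μ k (fun y => pd j χ y * Y i y - pd i χ y * Y j y) x ^ 2 +
      η ^ 2 * (Mo V μ k (fun y => |χ y * Y i y|) x ^ 2 + Mo V μ k (fun y => |χ y * Y j y|) x ^ 2)) μ :=
    fun i j => (b1 i j).1.add (((b2 i).1.add (b2 j).1).const_mul _)
  have pc : ∀ i j, Continuous (pd j (Mo V μ k (fun y => χ y * Y i y))) := fun i j =>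
    pd_cont j ((hX1 i).of_le (by norm_num))
  have step : ∫ x, (1/2) * ∑ i, ∑ j, (pd j (Mo V μ k (fun y => χ y * Y i y)) x -
      pd i (Mo V μ k (fun y => χ y * Y j y)) x) ^ 2 ∂μ ≤
      ∫ x, 3/2 * ∑ i, ∑ j, (Mo V μ k (fun y => pd j χ y * Y i y - pd i χ y * Y j y) x ^ 2 +
      η ^ 2 * (Mo V μ k (fun y => |χ y * Y i y|) x ^ 2 + Mo V μ k (fun y => |χ y * Y j y|) x ^ 2)) ∂μ := by
    refine integral_mono_of_nonneg (ae_of_all _ fun x => ?_)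
      ((integrable_finsetSum _ fun i _ => integrable_finsetSum _ fun j _ => i1 i j).const_mul _)
      (ae_of_all _ fun x => ?_)
    · simp only [Pi.zero_apply]; positivity
    · simp only
      have : (3/2 : ℝ) = 1/2 * 3 := by norm_num
      rw [this, mul_assoc, Finset.mul_sum (a := (3:ℝ))]
      simp_rw [Finset.mul_sum (a := (3:ℝ))]
      gcongr with i _ j _
      exact hcl x i j
  refine step.trans ?_
  rw [integral_const_mul, integral_finsetSum _ (fun i _ => integrable_finsetSum _ fun j _ => i1 i j)]
  rw [mul_left_comm (exp η), Finset.mul_sum (a := exp η)]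
  refine mul_le_mul_of_nonneg_left (Finset.sum_le_sum fun i _ => ?_) (by norm_num)
  rw [integral_finsetSum _ (fun j _ => i1 i j), Finset.mul_sum]
  refine Finset.sum_le_sum fun j _ => ?_
  have i2 : Integrable (fun x => Mo V μ k (fun y => |χ y * Y i y|) x ^ 2 +
    Mo V μ k (fun y => |χ y * Y j y|) x ^ 2) μ := (b2 i).1.add (b2 j).1
  rw [integral_add (b1 i j).1 (i2.const_mul _), integral_const_mul, integral_add (b2 i).1 (b2 j).1]
  have t1 := (b1 i j).2
  have t2 := mul_le_mul_of_nonneg_left (add_le_add (b2 i).2 (b2 j).2) (sq_nonneg η)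
  linarith
end

noncomputable def bmp (n : ℕ) (N : ℕ) : ContDiffBump (0 : EuclideanSpace ℝ (Fin n)) where
  rIn := 1 / ((N : ℝ) + 1)
  rOut := 2 / ((N : ℝ) + 1)
  rIn_pos := by positivity
  rIn_lt_rOut := by
    have : (0 : ℝ) < (N : ℝ) + 1 := by positivity
    gcongr; norm_num

noncomputable def ker (n N : ℕ) : EuclideanSpace ℝ (Fin n) → ℝ := (bmp n N).normed volume

theorem ker_cd (n N : ℕ) : ContDiff ℝ 2 (ker n N) := (bmp n N).contDiff_normed
theorem ker_supp (n N : ℕ) : HasCompactSupport (ker n N) := (bmp n N).hasCompactSupport_normed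
theorem ker_nonneg (n N : ℕ) (x) : 0 ≤ ker n N x := (bmp n N).nonneg_normed x
theorem ker_one (n N : ℕ) : ∫⁻ x, ENNReal.ofReal (ker n N x) = 1 := by
  rw [← ofReal_integral_eq_lintegral_ofReal]
  · unfold ker; rw [ContDiffBump.integral_normed]; simp
  · exact (bmp n N).integrable_normed
  · exact ae_of_all _ (ker_nonneg n N)
theorem rOut_lim (n : ℕ) : Filter.Tendsto (fun N => (bmp n N).rOut) Filter.atTop (nhds 0) := by
  have := (tendsto_one_div_add_atTop_nhds_zero_nat (𝕜 := ℝ)).const_mul 2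
  simp only [mul_zero] at this
  refine this.congr fun N => ?_
  simp only [bmp]; ring
theorem ker_ae (n : ℕ) {g : EuclideanSpace ℝ (Fin n) → ℝ} (hg : LocallyIntegrable g volume) :
    ∀ᵐ x, Filter.Tendsto (fun N => convolution (ker n N) g (ContinuousLinearMap.lsmul ℝ ℝ) volume x)
      Filter.atTop (nhds (g x)) := by
  refine ContDiffBump.ae_convolution_tendsto_right_of_locallyIntegrable (K := 2) (rOut_lim n)
    (Filter.Eventually.of_forall fun N => ?_) hg
  simp only [bmp]
  apply le_of_eq; ring

theorem unif_small {n : ℕ} {K : Set (EuclideanSpace ℝ (Fin n))} (hK : IsCompact K)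
    {f : EuclideanSpace ℝ (Fin n) → ℝ} (hf : Continuous f) {η : ℝ} (hη : 0 < η) :
    ∀ᶠ N in Filter.atTop, ∀ x y, ker n N (x - y) ≠ 0 → y ∈ K → |f x - f y| ≤ η := by
  have := hK.uniformContinuousAt_of_continuousAt f (fun a _ => hf.continuousAt) (Metric.dist_mem_uniformity hη)
  obtain ⟨δ, hδ, h⟩ := Metric.mem_uniformity_dist.1 this
  filter_upwards [(rOut_lim n).eventually (gt_mem_nhds hδ)] with N hN x y hxy hy
  have h1 : x - y ∈ Metric.ball 0 (bmp n N).rOut := by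
    rw [← (bmp n N).support_normed_eq (μ := volume)]; exact hxy
  have h2 : dist y x < δ := by
    rw [dist_comm, dist_eq_norm]
    rw [mem_ball_zero_iff] at h1
    exact h1.trans hN
  have := h h2 hy
  rw [← Real.dist_eq, dist_comm]
  exact le_of_lt this

section
variable {n : ℕ} {V : EuclideanSpace ℝ (Fin n) → ℝ}
    {μ : Measure (EuclideanSpace ℝ (Fin n))} [IsProbabilityMeasure μ]
    {k χ : EuclideanSpace ℝ (Fin n) → ℝ}
    {Y : Fin n → EuclideanSpace ℝ (Fin n) → ℝ} {h : EuclideanSpace ℝ (Fin n) → ℝ}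

theorem Mo_ae (hV : ContDiff ℝ 2 V)
    (hμ : μ = volume.withDensity (fun x => ENNReal.ofReal (exp (-V x))))
    {F : EuclideanSpace ℝ (Fin n) → ℝ} (hF : Integrable F μ) :
    ∀ᵐ x ∂μ, Filter.Tendsto (fun N => Mo V μ (ker n N) F x) Filter.atTop (nhds (F x)) := by
  have hac : μ ≪ volume := by rw [hμ]; exact withDensity_absolutelyContinuous _ _
  filter_upwards [hac.ae_le (ker_ae n (conv_integrable hV hμ hF).locallyIntegrable)] with x hx
  have := hx.const_mul (exp (V x))
  rw [← mul_assoc, ← exp_add, add_neg_cancel, exp_zero, one_mul] at this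
  refine this.congr fun N => ?_
  rw [← conv_eq hV hμ]; rfl

theorem key2 (hV : ContDiff ℝ 2 V)
    (hμ : μ = volume.withDensity (fun x => ENNReal.ofReal (exp (-V x)))) (lam : ℝ) (hlam : 0 < lam)
    (hB : ∀ X : Fin n → EuclideanSpace ℝ (Fin n) → ℝ, (∀ i, ContDiff ℝ 2 (X i)) →
      (∀ i, HasCompactSupport (X i)) → lam * ∫ x, ∑ i, X i x ^ 2 ∂μ ≤
      ∫ x, (∑ i, Da V i (X i) x) ^ 2 ∂μ +
        ∫ x, (1/2) * ∑ i, ∑ j, (pd j (X i) x - pd i (X j) x) ^ 2 ∂μ)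
    (hχ : ContDiff ℝ 2 χ) (hχc : HasCompactSupport χ)
    (hYm : ∀ i, Measurable (Y i)) (hhm : Measurable h)
    (hY : ∀ i, MemLp (Y i) 2 μ) (hh : MemLp h 2 μ)
    (hdiv : ∀ u, ContDiff ℝ 2 u → HasCompactSupport u →
      ∫ x, ∑ i, pd i u x * Y i x ∂μ = ∫ x, u x * h x ∂μ)
    (hcurl : ∀ u, ContDiff ℝ 2 u → HasCompactSupport u → ∀ i j,
      ∫ x, Da V j u x * Y i x ∂μ = ∫ x, Da V i u x * Y j x ∂μ) :
    lam * ∫ x, ∑ i, (χ x * Y i x) ^ 2 ∂μ ≤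
      ∫ x, (χ x * h x - ∑ i, pd i χ x * Y i x) ^ 2 ∂μ +
        3 / 2 * ∑ i, ∑ j, ∫ x, (pd j χ x * Y i x - pd i χ x * Y j x) ^ 2 ∂μ := by
  have m1 : ∀ i, MemLp (fun y => χ y * Y i y) 2 μ := fun i => memlp_mul hχ.continuous hχc (hY i)
  have hηb : ∀ η : ℝ, 0 < η → lam * ∫ x, ∑ i, (χ x * Y i x) ^ 2 ∂μ ≤
      exp η * (∫ x, (χ x * h x - ∑ i, pd i χ x * Y i x) ^ 2 ∂μ +
        3 / 2 * ∑ i, ∑ j, (∫ x, (pd j χ x * Y i x - pd i χ x * Y j x) ^ 2 ∂μ +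
          η ^ 2 * (∫ x, (χ x * Y i x) ^ 2 ∂μ + ∫ x, (χ x * Y j x) ^ 2 ∂μ))) := by
    intro η hη
    rw [mul_comm lam, ← le_div_iff₀ hlam]
    have e1 := unif_small (K := tsupport χ) hχc hV.continuous hη
    have e2 : ∀ᶠ N in Filter.atTop, ∀ j, ∀ x y, ker n N (x - y) ≠ 0 → y ∈ tsupport χ →
      |pd j V x - pd j V y| ≤ η := Filter.eventually_all.2 fun j =>
        unif_small (K := tsupport χ) hχc (pd_cd j hV).continuous hη
    have hX1 : ∀ N i, ContDiff ℝ 2 (Mo V μ (ker n N) (fun y => χ y * Y i y)) := fun N i =>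
      hV.exp.mul (conv_cd hV hμ (ker_cd n N) (ker_supp n N) ((m1 i).integrable (by norm_num)))
    have hX2 : ∀ N i, HasCompactSupport (Mo V μ (ker n N) (fun y => χ y * Y i y)) := fun N i =>
      (conv_supp hV hμ (ker_supp n N) hχc.mul_right).mul_left
    refine fatou_real μ (fun N x => ∑ i, Mo V μ (ker n N) (fun y => χ y * Y i y) x ^ 2) _
      (fun N => ?_) (fun N x => by positivity) ?_ (fun x => by positivity) ?_ _ ?_
    · refine integrable_finsetSum _ fun i _ => ?_
      refine cpt_int μ ((hX1 N i).continuous.pow 2) ?_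
      have := (hX2 N i).mul_left (f := Mo V μ (ker n N) (fun y => χ y * Y i y))
      simp_rw [sq]
      exact this
    · exact integrable_finsetSum _ fun i _ => (m1 i).integrable_sq
    · have : ∀ᵐ x ∂μ, ∀ i, Filter.Tendsto (fun N => Mo V μ (ker n N) (fun y => χ y * Y i y) x)
          Filter.atTop (nhds (χ x * Y i x)) := ae_all_iff.2 fun i =>
            Mo_ae hV hμ ((m1 i).integrable (by norm_num))
      filter_upwards [this] with x hx
      exact tendsto_finsetSum _ fun i _ => (hx i).pow 2
    · filter_upwards [e1, e2] with N h1 h2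
      rw [le_div_iff₀ hlam, mul_comm _ lam]
      exact key1 hV hμ lam hB (ker_cd n N) (ker_supp n N) (ker_nonneg n N) (ker_one n N) hχ hχc
        hYm hhm hY hh hdiv hcurl η fun x y hxy hy => ⟨(le_abs_self _).trans (h1 x y hxy hy), fun j => h2 j x y hxy hy⟩
  have hc : Continuous fun η : ℝ => exp η * (∫ x, (χ x * h x - ∑ i, pd i χ x * Y i x) ^ 2 ∂μ +
        3 / 2 * ∑ i, ∑ j, (∫ x, (pd j χ x * Y i x - pd i χ x * Y j x) ^ 2 ∂μ +
          η ^ 2 * (∫ x, (χ x * Y i x) ^ 2 ∂μ + ∫ x, (χ x * Y j x) ^ 2 ∂μ))) := by fun_prop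
  have hl := (hc.tendsto 0).mono_left (nhdsWithin_le_nhds (s := Set.Ioi 0))
  have := ge_of_tendsto hl (Filter.eventually_of_mem self_mem_nhdsWithin hηb)
  simpa using this
end

theorem cutoffs (n : ℕ) : ∃ (χ : ℕ → EuclideanSpace ℝ (Fin n) → ℝ) (C : ℝ), 0 ≤ C ∧
    (∀ N, ContDiff ℝ 2 (χ N)) ∧ (∀ N, HasCompactSupport (χ N)) ∧ (∀ N x, |χ N x| ≤ 1) ∧
    (∀ N i x, |pd i (χ N) x| ≤ C) ∧
    (∀ x, Filter.Tendsto (fun N => χ N x) Filter.atTop (nhds 1)) ∧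
    (∀ i x, Filter.Tendsto (fun N => pd i (χ N) x) Filter.atTop (nhds 0)) := by
  let b : ContDiffBump (0 : EuclideanSpace ℝ (Fin n)) := ⟨1, 2, by norm_num, by norm_num⟩
  have hb : ContDiff ℝ 2 b := b.contDiff
  obtain ⟨C, hC⟩ := (hb.continuous_fderiv (by norm_num)).bounded_above_of_compact_support
    (b.hasCompactSupport.fderiv ℝ)
  have hC0 : 0 ≤ C := (norm_nonneg _).trans (hC 0)
  have hpd : ∀ (N : ℕ) i x, |pd i (fun x => b ((1 / ((N : ℝ) + 1)) • x)) x| ≤ (1 / ((N : ℝ) + 1)) * C := by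
    intro N i x
    unfold pd
    rw [fderiv_comp_smul]
    simp only [FunLike.coe_smul, Pi.smul_apply, smul_eq_mul]
    rw [abs_mul, abs_of_nonneg (by positivity)]
    refine mul_le_mul_of_nonneg_left ?_ (by positivity)
    have := (fderiv ℝ b ((1 / ((N : ℝ) + 1)) • x)).le_opNorm (EuclideanSpace.single i 1)
    rw [← Real.norm_eq_abs]
    refine this.trans ?_
    simpa using hC _
  have hl := tendsto_one_div_add_atTop_nhds_zero_nat (𝕜 := ℝ)
  refine ⟨fun N x => b ((1 / ((N : ℝ) + 1)) • x), C, hC0, fun N => ?_, fun N => ?_, fun N x => ?_,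
    fun N i x => ?_, fun x => ?_, fun i x => ?_⟩
  · exact hb.comp (contDiff_const_smul _)
  · exact b.hasCompactSupport.comp_smul (by positivity)
  · rw [abs_of_nonneg b.nonneg]; exact b.le_one
  · refine (hpd N i x).trans ?_
    refine mul_le_of_le_one_left hC0 ?_
    rw [div_le_one (by positivity)]
    simp
  · have h1 : Filter.Tendsto (fun N : ℕ => (1 / ((N : ℝ) + 1)) • x) Filter.atTop (nhds (0 : EuclideanSpace ℝ (Fin n))) := by
      simpa using hl.smul_const x
    have h2 : b 0 = 1 := b.one_of_mem_closedBall (Metric.mem_closedBall_self (by norm_num))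
    have h7 := (b.continuous.tendsto 0).comp h1
    rw [h2] at h7
    exact h7
  · refine squeeze_zero_norm (hpd · i x) ?_
    simpa using hl.mul_const C

section
variable {n : ℕ} {V : EuclideanSpace ℝ (Fin n) → ℝ}
    {μ : Measure (EuclideanSpace ℝ (Fin n))} [IsProbabilityMeasure μ]
    {Y : Fin n → EuclideanSpace ℝ (Fin n) → ℝ} {h : EuclideanSpace ℝ (Fin n) → ℝ}

theorem key3 (hV : ContDiff ℝ 2 V)
    (hμ : μ = volume.withDensity (fun x => ENNReal.ofReal (exp (-V x)))) (lam : ℝ) (hlam : 0 < lam)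
    (hB : ∀ X : Fin n → EuclideanSpace ℝ (Fin n) → ℝ, (∀ i, ContDiff ℝ 2 (X i)) →
      (∀ i, HasCompactSupport (X i)) → lam * ∫ x, ∑ i, X i x ^ 2 ∂μ ≤
      ∫ x, (∑ i, Da V i (X i) x) ^ 2 ∂μ +
        ∫ x, (1/2) * ∑ i, ∑ j, (pd j (X i) x - pd i (X j) x) ^ 2 ∂μ)
    (hYm : ∀ i, Measurable (Y i)) (hhm : Measurable h)
    (hY : ∀ i, MemLp (Y i) 2 μ) (hh : MemLp h 2 μ)
    (hdiv : ∀ u, ContDiff ℝ 2 u → HasCompactSupport u →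
      ∫ x, ∑ i, pd i u x * Y i x ∂μ = ∫ x, u x * h x ∂μ)
    (hcurl : ∀ u, ContDiff ℝ 2 u → HasCompactSupport u → ∀ i j,
      ∫ x, Da V j u x * Y i x ∂μ = ∫ x, Da V i u x * Y j x ∂μ) :
    lam * ∫ x, ∑ i, Y i x ^ 2 ∂μ ≤ ∫ x, h x ^ 2 ∂μ := by
  obtain ⟨χ, C, hC0, h1, h2, h3, h4, h5, h6⟩ := cutoffs n
  have hk := fun N => key2 hV hμ lam hlam hB (h1 N) (h2 N) hYm hhm hY hh hdiv hcurl
  have hχm : ∀ N, Measurable (χ N) := fun N => (h1 N).continuous.measurable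
  have hpm : ∀ N j, Measurable (pd j (χ N)) := fun N j => (pd_cont j ((h1 N).of_le (by norm_num))).measurable
  have t1 : Filter.Tendsto (fun N => ∫ x, ∑ i, (χ N x * Y i x) ^ 2 ∂μ) Filter.atTop
      (nhds (∫ x, ∑ i, (1 * Y i x) ^ 2 ∂μ)) := by
    refine tendsto_integral_of_dominated_convergence (fun x => ∑ i, Y i x ^ 2) (fun N => ?_)
      (integrable_finsetSum _ fun i _ => (hY i).integrable_sq) (fun N => ae_of_all _ fun x => ?_)
      (ae_of_all _ fun x => ?_)
    · exact (Finset.measurable_sum _ fun i _ => ((hχm N).mul (hYm i)).pow_const 2).aestronglyMeasurable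
    · rw [Real.norm_of_nonneg (by positivity)]
      refine Finset.sum_le_sum fun i _ => ?_
      rw [mul_pow]
      refine mul_le_of_le_one_left (sq_nonneg _) ?_
      rw [← sq_abs]
      exact pow_le_one₀ (abs_nonneg _) (h3 N x)
    · exact tendsto_finsetSum _ fun i _ => ((h5 x).mul_const _).pow 2
  have t2 : Filter.Tendsto (fun N => ∫ x, (χ N x * h x - ∑ i, pd i (χ N) x * Y i x) ^ 2 ∂μ) Filter.atTop
      (nhds (∫ x, (1 * h x - ∑ i, 0 * Y i x) ^ 2 ∂μ)) := by
    have hS : MemLp (fun x => |h x| + C * ∑ i, |Y i x|) 2 μ :=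
      hh.abs.add ((memLp_finsetSum _ fun i _ => (hY i).abs).const_mul C)
    refine tendsto_integral_of_dominated_convergence (fun x => (|h x| + C * ∑ i, |Y i x|) ^ 2) (fun N => ?_)
      hS.integrable_sq (fun N => ae_of_all _ fun x => ?_)
      (ae_of_all _ fun x => ?_)
    · exact ((((hχm N).mul hhm).sub (Finset.measurable_sum _ fun i _ =>
        ((hpm N i).mul (hYm i)))).pow_const 2).aestronglyMeasurable
    · rw [Real.norm_of_nonneg (by positivity), ← sq_abs]
      refine pow_le_pow_left₀ (abs_nonneg _) ?_ 2
      refine (abs_sub _ _).trans (add_le_add ?_ ?_)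
      · rw [abs_mul]; exact mul_le_of_le_one_left (abs_nonneg _) (h3 N x)
      · refine (Finset.abs_sum_le_sum_abs _ _).trans ?_
        rw [Finset.mul_sum]
        refine Finset.sum_le_sum fun i _ => ?_
        rw [abs_mul]
        exact mul_le_mul_of_nonneg_right (h4 N i x) (abs_nonneg _)
    · exact (((h5 x).mul_const _).sub (tendsto_finsetSum _ fun i _ => (h6 i x).mul_const _)).pow 2
  have t3 : ∀ i j, Filter.Tendsto (fun N => ∫ x, (pd j (χ N) x * Y i x - pd i (χ N) x * Y j x) ^ 2 ∂μ) Filter.atTop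
      (nhds (∫ x, (0 * Y i x - 0 * Y j x) ^ 2 ∂μ)) := by
    intro i j
    have hS : MemLp (fun x => C * |Y i x| + C * |Y j x|) 2 μ :=
      ((hY i).abs.const_mul C).add ((hY j).abs.const_mul C)
    refine tendsto_integral_of_dominated_convergence (fun x => (C * |Y i x| + C * |Y j x|) ^ 2) (fun N => ?_)
      hS.integrable_sq (fun N => ae_of_all _ fun x => ?_)
      (ae_of_all _ fun x => ?_)
    · exact ((((hpm N j).mul (hYm i)).sub ((hpm N i).mul (hYm j))).pow_const 2).aestronglyMeasurable
    · rw [Real.norm_of_nonneg (by positivity), ← sq_abs]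
      refine pow_le_pow_left₀ (abs_nonneg _) ?_ 2
      refine (abs_sub _ _).trans (add_le_add ?_ ?_)
      · rw [abs_mul]; exact mul_le_mul_of_nonneg_right (h4 N _ x) (abs_nonneg _)
      · rw [abs_mul]; exact mul_le_mul_of_nonneg_right (h4 N _ x) (abs_nonneg _)
    · exact (((h6 j x).mul_const _).sub ((h6 i x).mul_const _)).pow 2
  have := le_of_tendsto_of_tendsto (t1.const_mul lam) (t2.add ((tendsto_finsetSum Finset.univ fun i _ =>
    tendsto_finsetSum Finset.univ fun j _ => t3 i j).const_mul (3/2))) (Filter.Eventually.of_forall hk)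
  simpa using this
end

abbrev L2 {n : ℕ} (μ : Measure (EuclideanSpace ℝ (Fin n))) := Lp ℝ 2 μ
abbrev H2 {n : ℕ} (μ : Measure (EuclideanSpace ℝ (Fin n))) := PiLp 2 (fun _ : Fin n => L2 μ)

section
variable {n : ℕ} {V : EuclideanSpace ℝ (Fin n) → ℝ}
    {μ : Measure (EuclideanSpace ℝ (Fin n))} [IsProbabilityMeasure μ]

theorem ip_eq {a b : L2 μ} {f g : EuclideanSpace ℝ (Fin n) → ℝ} (hf : a =ᵐ[μ] f) (hg : b =ᵐ[μ] g) :
    ⟪a, b⟫ = ∫ x, f x * g x ∂μ := by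
  rw [MeasureTheory.L2.inner_def]
  apply integral_congr_ae
  filter_upwards [hf, hg] with x h1 h2
  rw [h1, h2]
  simp [mul_comm]

theorem ip_H {a b : H2 μ} {f g : Fin n → EuclideanSpace ℝ (Fin n) → ℝ} (hf : ∀ i, a i =ᵐ[μ] f i)
    (hg : ∀ i, b i =ᵐ[μ] g i) :
    ⟪a, b⟫ = ∑ i, ∫ x, f i x * g i x ∂μ := by
  rw [PiLp.inner_apply]
  exact Finset.sum_congr rfl fun i _ => ip_eq (hf i) (hg i)

theorem exists_rep {f : EuclideanSpace ℝ (Fin n) → ℝ} (hf : Continuous f) (hc : HasCompactSupport f) :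
    ∃ a : L2 μ, a =ᵐ[μ] f :=
  ⟨(hf.memLp_of_hasCompactSupport hc (p := 2)).toLp f, MemLp.coeFn_toLp _⟩

theorem cs_memLp {f : EuclideanSpace ℝ (Fin n) → ℝ} (hf : Continuous f) (hc : HasCompactSupport f) :
    MemLp f 2 μ := hf.memLp_of_hasCompactSupport hc

theorem exists_H {f : Fin n → EuclideanSpace ℝ (Fin n) → ℝ} (hf : ∀ i, ∃ a : L2 μ, a =ᵐ[μ] f i) :
    ∃ a : H2 μ, ∀ i, a i =ᵐ[μ] f i := by
  choose a ha using hf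
  exact ⟨WithLp.toLp 2 a, ha⟩

theorem dual_bound (hV : ContDiff ℝ 2 V)
    (hμ : μ = volume.withDensity (fun x => ENNReal.ofReal (exp (-V x)))) (lam : ℝ) (hlam : 0 < lam)
    (hB : ∀ X : Fin n → EuclideanSpace ℝ (Fin n) → ℝ, (∀ i, ContDiff ℝ 2 (X i)) →
      (∀ i, HasCompactSupport (X i)) → lam * ∫ x, ∑ i, X i x ^ 2 ∂μ ≤
      ∫ x, (∑ i, Da V i (X i) x) ^ 2 ∂μ +
        ∫ x, (1/2) * ∑ i, ∑ j, (pd j (X i) x - pd i (X j) x) ^ 2 ∂μ)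
    (s : L2 μ) (X : H2 μ)
    (hX : ∀ u, ContDiff ℝ 2 u → HasCompactSupport u → ∀ w : H2 μ, (∀ i, w i =ᵐ[μ] pd i u) →
      ∀ v : L2 μ, v =ᵐ[μ] u → ⟪w, X⟫ = ⟪v, s⟫)
    (g : EuclideanSpace ℝ (Fin n) → ℝ) (hg : ContDiff ℝ 2 g) (hgc : HasCompactSupport g)
    (gL : L2 μ) (hgL : gL =ᵐ[μ] g) :
    lam * ⟪gL, s⟫ ^ 2 ≤ (∫ x, ∑ i, pd i g x ^ 2 ∂μ) * ‖s‖ ^ 2 := by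
  set G : Submodule ℝ (H2 μ) := Submodule.span ℝ
    {w | ∃ u, ContDiff ℝ 2 u ∧ HasCompactSupport u ∧ ∀ i, w i =ᵐ[μ] pd i u} with hG
  have hrep : ∀ u, ContDiff ℝ 2 u → HasCompactSupport u → ∃ w : H2 μ, ∀ i, w i =ᵐ[μ] pd i u :=
    fun u hu hc => exists_H fun i => exists_rep (pd_cont i (hu.of_le (by norm_num))) (pd_supp i hc)
  haveI : CompleteSpace (H2 μ) := PiLp.completeSpace 2 _
  haveI : CompleteSpace Gᗮ := (Submodule.isClosed_orthogonal G).completeSpace_coe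
  haveI : (Gᗮ).HasOrthogonalProjection := Submodule.HasOrthogonalProjection.ofCompleteSpace Gᗮ
  obtain ⟨a, ha, Y, hY, haY⟩ := (Gᗮ).exists_add_mem_mem_orthogonal X
  have hXY : ∀ w ∈ G, ⟪w, X⟫ = ⟪w, Y⟫ := fun w hw => by
    rw [haY, inner_add_right, (Submodule.mem_orthogonal G a).1 ha w hw, zero_add]
  have hYr : ∀ i, (Y i : EuclideanSpace ℝ (Fin n) → ℝ) =ᵐ[μ] Y i := fun i => Filter.EventuallyEq.rfl
  have hYm : ∀ i, MemLp (Y i) 2 μ := fun i => Lp.memLp (Y i)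
  have hdiv : ∀ u, ContDiff ℝ 2 u → HasCompactSupport u →
      ∫ x, ∑ i, pd i u x * Y i x ∂μ = ∫ x, u x * s x ∂μ := by
    intro u hu hc
    obtain ⟨w, hw⟩ := hrep u hu hc
    obtain ⟨v, hv⟩ := exists_rep (μ := μ) hu.continuous hc
    have := hX u hu hc w hw v hv
    rw [hXY w (Submodule.subset_span ⟨u, hu, hc, hw⟩), ip_H hw hYr, ip_eq hv Filter.EventuallyEq.rfl] at this
    rw [← this, integral_finsetSum]
    exact fun i _ => (memlp_mul (pd_cont i (hu.of_le (by norm_num))) (pd_supp i hc) (hYm i)).integrable (by norm_num)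
  have hcurl : ∀ u, ContDiff ℝ 2 u → HasCompactSupport u → ∀ i j,
      ∫ x, Da V j u x * Y i x ∂μ = ∫ x, Da V i u x * Y j x ∂μ := by
    intro u hu hc i j
    have hu1 : ContDiff ℝ 1 u := hu.of_le (by norm_num)
    have hr : ∀ j, ∃ b : L2 μ, b =ᵐ[μ] Da V j u := fun j =>
      exists_rep (Da_cont hV j hu1) (Da_supp V j hc)
    choose b hb using hr
    set θ : H2 μ := WithLp.toLp 2 (fun l => (if l = i then b j else 0) - (if l = j then b i else 0)) with hθ
    have hin : ∀ Z : H2 μ, ⟪Z, θ⟫ = ⟪Z i, b j⟫ - ⟪Z j, b i⟫ := by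
      intro Z
      rw [PiLp.inner_apply]
      have hite : ∀ (l i : Fin n) (z b : L2 μ), ⟪z, if l = i then b else 0⟫ = if l = i then ⟪z, b⟫ else 0 := by
        intro l i z b
        split_ifs <;> simp
      simp only [hθ, inner_sub_right, Finset.sum_sub_distrib, hite]
      rw [Finset.sum_ite_eq', Finset.sum_ite_eq', if_pos (Finset.mem_univ _), if_pos (Finset.mem_univ _)]
    have hmem : θ ∈ Gᗮ := by
      rw [Submodule.mem_orthogonal]
      intro w hw
      induction hw using Submodule.span_induction with
      | mem w hw =>
        obtain ⟨v, hv, hvc, hwv⟩ := hw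
        rw [hin, ip_eq (hwv i) (hb j), ip_eq (hwv j) (hb i), ← ibp hV hμ j (pd_cd i hv) hu1 hc,
          ← ibp hV hμ i (pd_cd j hv) hu1 hc]
        simp_rw [pd_comm j i hv]
        simp
      | zero => simp
      | add x y _ _ h1 h2 => rw [inner_add_left, h1, h2, add_zero]
      | smul c x _ h1 => rw [inner_smul_left, h1, mul_zero]
    have := (Submodule.mem_orthogonal' _ _).1 hY θ hmem
    rw [hin, ip_eq (hYr i) (hb j), ip_eq (hYr j) (hb i)] at this
    simp_rw [mul_comm (Da V _ _ _)]
    linarith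
  have key := key3 hV hμ lam hlam hB (fun i => (Lp.stronglyMeasurable (Y i)).measurable)
    (Lp.stronglyMeasurable s).measurable hYm (Lp.memLp s) hdiv hcurl
  have nY : ‖Y‖ ^ 2 = ∫ x, ∑ i, Y i x ^ 2 ∂μ := by
    rw [← real_inner_self_eq_norm_sq, ip_H hYr hYr, integral_finsetSum _ fun i _ => (hYm i).integrable_sq]
    simp_rw [sq]
  have ns : ‖s‖ ^ 2 = ∫ x, s x ^ 2 ∂μ := by
    rw [← real_inner_self_eq_norm_sq, ip_eq Filter.EventuallyEq.rfl Filter.EventuallyEq.rfl]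
    simp_rw [sq]
  obtain ⟨w, hw⟩ := hrep g hg hgc
  have nw : ‖w‖ ^ 2 = ∫ x, ∑ i, pd i g x ^ 2 ∂μ := by
    rw [← real_inner_self_eq_norm_sq, ip_H hw hw, integral_finsetSum _ fun i _ =>
      (cs_memLp (pd_cont i (hg.of_le (by norm_num))) (pd_supp i hgc)).integrable_sq]
    simp_rw [sq]
  rw [← nw, ← hX g hg hgc w hw gL hgL, hXY w (Submodule.subset_span ⟨g, hg, hgc, hw⟩)]
  rw [← nY, ← ns] at key
  have cs := abs_real_inner_le_norm w Y
  have cs2 : ⟪w, Y⟫ ^ 2 ≤ ‖w‖ ^ 2 * ‖Y‖ ^ 2 := by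
    rw [← sq_abs, ← mul_pow]; exact pow_le_pow_left₀ (abs_nonneg _) cs 2
  calc lam * ⟪w, Y⟫ ^ 2 ≤ lam * (‖w‖ ^ 2 * ‖Y‖ ^ 2) := by gcongr
    _ = ‖w‖ ^ 2 * (lam * ‖Y‖ ^ 2) := by ring
    _ ≤ _ := by gcongr
end

section
variable {n : ℕ} {V : EuclideanSpace ℝ (Fin n) → ℝ}
    {μ : Measure (EuclideanSpace ℝ (Fin n))} [IsProbabilityMeasure μ]

theorem ae_const (hV : ContDiff ℝ 2 V)
    (hμ : μ = volume.withDensity (fun x => ENNReal.ofReal (exp (-V x))))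
    {w : EuclideanSpace ℝ (Fin n) → ℝ} (hw : Integrable w μ)
    (hS : ∀ i F, ContDiff ℝ 2 F → HasCompactSupport F → ∫ x, Da V i F x * w x ∂μ = 0) :
    ∃ c : ℝ, ∀ᵐ x ∂μ, w x = c := by
  have hac : μ ≪ volume := by rw [hμ]; exact withDensity_absolutelyContinuous _ _
  have hli : LocallyIntegrable w volume := by
    have h1 := (conv_integrable hV hμ hw).locallyIntegrable
    rw [← locallyIntegrableOn_univ] at h1 ⊢
    have h2 := h1.continuousOn_mul (hV.continuous.rexp.continuousOn) isClosed_univ.isLocallyClosed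
    refine h2.congr (ae_of_all _ fun x => ?_)
    rw [← mul_assoc, ← exp_add, add_neg_cancel, exp_zero, one_mul]
  set C : ℕ → EuclideanSpace ℝ (Fin n) → ℝ := fun N =>
    convolution (ker n N) w (ContinuousLinearMap.lsmul ℝ ℝ) volume with hC
  have hcd : ∀ N, ContDiff ℝ 2 (C N) := fun N =>
    (ker_supp n N).contDiff_convolution_left _ (ker_cd n N) hli
  have hpd : ∀ N i x, pd i (C N) x = 0 := by
    intro N i x
    have hk1 : ContDiff ℝ 1 (ker n N) := (ker_cd n N).of_le (by norm_num)
    have h := (ker_supp n N).hasFDerivAt_convolution_left (ContinuousLinearMap.lsmul ℝ ℝ) hk1 hli x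
    have hF := hS i (fun y => exp (V y) * ker n N (x - y))
      (hV.exp.mul ((ker_cd n N).comp (contDiff_const.sub contDiff_id)))
      (HasCompactSupport.mul_left ((ker_supp n N).comp_homeomorph (Homeomorph.subLeft x)))
    have hDa : ∀ y, Da V i (fun y => exp (V y) * ker n N (x - y)) y = exp (V y) * pd i (ker n N) (x - y) := by
      intro y
      unfold Da
      have hd : DifferentiableAt ℝ (fun y => ker n N (x - y)) y :=
        ((ker_cd n N).comp (contDiff_const.sub contDiff_id)).differentiable (by norm_num) y
      rw [pd_mul i (hV.exp.differentiable (by norm_num) y) hd,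
        pd_exp i (hV.differentiable (by norm_num) y), pd_sub_left i (ker_cd n N)]
      ring
    simp_rw [hDa] at hF
    rw [int_mu hV hμ] at hF
    unfold pd
    rw [h.fderiv, convolution_eq_swap, ContinuousLinearMap.integral_apply]
    · rw [← hF]
      congr 1; ext y
      simp only [ContinuousLinearMap.precompL_apply, ContinuousLinearMap.lsmul_apply, smul_eq_mul]
      rw [← mul_assoc, ← mul_assoc, ← exp_add, neg_add_cancel, exp_zero, one_mul]; rfl
    · have := ((ker_supp n N).fderiv ℝ).convolutionExists_left
        (ContinuousLinearMap.precompL (EuclideanSpace ℝ (Fin n)) (ContinuousLinearMap.lsmul ℝ ℝ))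
        (hk1.continuous_fderiv (by norm_num)) hli x
      exact this.integrable_swap
  have hconst : ∀ N x y, C N x = C N y := by
    intro N
    refine is_const_of_fderiv_eq_zero (𝕜 := ℝ) ((hcd N).differentiable (by norm_num)) fun x => ?_
    have h1 : ‖gradient (C N) x‖ ^ 2 = 0 := by rw [norm_grad_sq]; simp [hpd]
    have h2 : gradient (C N) x = 0 := by simpa using h1
    unfold gradient at h2
    simpa using h2
  have hae := ker_ae n hli
  obtain ⟨x₀, hx₀⟩ := hae.exists
  refine ⟨w x₀, hac.ae_le ?_⟩
  filter_upwards [hae] with x hx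
  refine tendsto_nhds_unique hx (hx₀.congr fun N => hconst N _ _)

theorem poincare (hV : ContDiff ℝ 2 V)
    (hμ : μ = volume.withDensity (fun x => ENNReal.ofReal (exp (-V x)))) (lam : ℝ) (hlam : 0 < lam)
    (hB : ∀ X : Fin n → EuclideanSpace ℝ (Fin n) → ℝ, (∀ i, ContDiff ℝ 2 (X i)) →
      (∀ i, HasCompactSupport (X i)) → lam * ∫ x, ∑ i, X i x ^ 2 ∂μ ≤
      ∫ x, (∑ i, Da V i (X i) x) ^ 2 ∂μ +
        ∫ x, (1/2) * ∑ i, ∑ j, (pd j (X i) x - pd i (X j) x) ^ 2 ∂μ)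
    (g : EuclideanSpace ℝ (Fin n) → ℝ) (hg : ContDiff ℝ 2 g) (hgc : HasCompactSupport g) :
    lam * (∫ x, g x ^ 2 ∂μ - (∫ x, g x ∂μ) ^ 2) ≤ ∫ x, ∑ i, pd i g x ^ 2 ∂μ := by
  obtain ⟨gL, hgL⟩ := exists_rep (μ := μ) hg.continuous hgc
  obtain ⟨o, ho⟩ : ∃ o : L2 μ, o =ᵐ[μ] fun _ => (1 : ℝ) := ⟨(memLp_const 1).toLp _, MemLp.coeFn_toLp _⟩
  have hgi : Integrable g μ := cpt_int μ hg.continuous hgc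
  have hgo : ⟪gL, o⟫ = ∫ x, g x ∂μ := by rw [ip_eq hgL ho]; simp
  have hoo : ⟪o, o⟫ = 1 := by rw [ip_eq ho ho]; simp
  have hgg : ⟪gL, gL⟫ = ∫ x, g x ^ 2 ∂μ := by rw [ip_eq hgL hgL]; simp_rw [sq]
  set D := ∫ x, ∑ i, pd i g x ^ 2 ∂μ with hD
  set m := ∫ x, g x ∂μ with hm
  set k : L2 μ := gL - m • o with hk
  have hkk : ‖k‖ ^ 2 = ∫ x, g x ^ 2 ∂μ - m ^ 2 := by
    rw [← real_inner_self_eq_norm_sq, hk, inner_sub_left, inner_sub_right, inner_sub_right,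
      real_inner_smul_left, real_inner_smul_left, real_inner_smul_right, real_inner_smul_right,
      real_inner_comm gL o, hgo, hoo, hgg]
    ring
  set S : Submodule ℝ (L2 μ) := Submodule.span ℝ
    {s | ∃ i F, ContDiff ℝ 2 F ∧ HasCompactSupport F ∧ s =ᵐ[μ] Da V i F} with hS
  have hSb : ∀ s ∈ S, lam * ⟪k, s⟫ ^ 2 ≤ D * ‖s‖ ^ 2 := by
    intro s hs
    have : ⟪o, s⟫ = 0 ∧ ∃ X : H2 μ, ∀ u, ContDiff ℝ 2 u → HasCompactSupport u → ∀ w : H2 μ,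
        (∀ i, w i =ᵐ[μ] pd i u) → ∀ v : L2 μ, v =ᵐ[μ] u → ⟪w, X⟫ = ⟪v, s⟫ := by
      induction hs using Submodule.span_induction with
      | mem s hs =>
        obtain ⟨i, F, hF, hFc, hs⟩ := hs
        have hF1 : ContDiff ℝ 1 F := hF.of_le (by norm_num)
        constructor
        · rw [ip_eq ho hs]
          rw [← ibp hV hμ i (u := fun _ => (1 : ℝ)) contDiff_const hF1 hFc]
          simp [pd]
        · obtain ⟨b, hb⟩ := exists_rep (μ := μ) hF.continuous hFc
          refine ⟨WithLp.toLp 2 (fun l => if l = i then b else 0), fun u hu hc w hw v hv => ?_⟩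
          have hite : ∀ (l i : Fin n) (z b : L2 μ), ⟪z, if l = i then b else 0⟫ = if l = i then ⟪z, b⟫ else 0 := by
            intro l i z b
            split_ifs <;> simp
          rw [PiLp.inner_apply]
          simp only [hite]
          rw [Finset.sum_ite_eq', if_pos (Finset.mem_univ _), ip_eq (hw i) hb, ip_eq hv hs]
          exact ibp hV hμ i (hu.of_le (by norm_num)) hF1 hFc
      | zero => exact ⟨by simp, 0, fun _ _ _ _ _ _ _ => by simp⟩
      | add x y _ _ h1 h2 =>
        obtain ⟨a1, X1, b1⟩ := h1
        obtain ⟨a2, X2, b2⟩ := h2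
        refine ⟨by rw [inner_add_right, a1, a2, add_zero], X1 + X2, fun u hu hc w hw v hv => ?_⟩
        rw [inner_add_right, inner_add_right, b1 u hu hc w hw v hv, b2 u hu hc w hw v hv]
      | smul c x _ h1 =>
        obtain ⟨a1, X1, b1⟩ := h1
        refine ⟨by rw [inner_smul_right, a1, mul_zero], c • X1, fun u hu hc w hw v hv => ?_⟩
        rw [inner_smul_right, inner_smul_right, b1 u hu hc w hw v hv]
    obtain ⟨h1, X, hX⟩ := this
    have := dual_bound hV hμ lam hlam hB s X hX g hg hgc gL hgL
    rwa [hk, inner_sub_left, real_inner_smul_left, h1, mul_zero, sub_zero]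
  have hcl : k ∈ S.topologicalClosure := by
    rw [← Submodule.orthogonal_orthogonal_eq_closure, Submodule.mem_orthogonal]
    intro w hw
    have hwi : Integrable w μ := (Lp.memLp w).integrable (by norm_num)
    obtain ⟨c, hc⟩ := ae_const hV hμ hwi (fun i F hF hFc => by
      obtain ⟨s, hs⟩ := exists_rep (μ := μ) (Da_cont hV i (hF.of_le (by norm_num))) (Da_supp V i hFc)
      have := (Submodule.mem_orthogonal _ _).1 hw s (Submodule.subset_span ⟨i, F, hF, hFc, hs⟩)
      rwa [ip_eq hs Filter.EventuallyEq.rfl] at this)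
    rw [hk, inner_sub_right, real_inner_smul_right, ip_eq hc hgL, ip_eq hc ho, integral_const_mul, ← hm]
    simp; ring
  have hkb : lam * ⟪k, k⟫ ^ 2 ≤ D * ‖k‖ ^ 2 := by
    have hcs : IsClosed {s : L2 μ | lam * ⟪k, s⟫ ^ 2 ≤ D * ‖s‖ ^ 2} := by
      apply isClosed_le <;> fun_prop
    exact closure_minimal hSb hcs hcl
  rw [← hkk]
  rw [real_inner_self_eq_norm_sq] at hkb
  by_cases h0 : ‖k‖ ^ 2 = 0
  · rw [h0, mul_zero]
    exact integral_nonneg fun x => by positivity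
  · have : 0 < ‖k‖ ^ 2 := lt_of_le_of_ne (sq_nonneg _) (Ne.symm h0)
    rw [sq (‖k‖ ^ 2), ← mul_assoc] at hkb
    exact le_of_mul_le_mul_right hkb this
end

/-- Poincaré inequality with constant `1/min(εm, ρ₀ + α((1-ε)m/L)/r)` from a
transport-information inequality. -/
theorem stmt_3 {n : ℕ} (V ρ : EuclideanSpace ℝ (Fin n) → ℝ)
    (hV : ContDiff ℝ 2 V) (hVint : Integrable (fun x => Real.exp (-V x)))
    (μ : Measure (EuclideanSpace ℝ (Fin n)))
    (hμ : μ = volume.withDensity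
      (fun x => ENNReal.ofReal (Real.exp (-V x) / ∫ y, Real.exp (-V y))))
    (hρcont : Continuous ρ)
    (hHess : ∀ x u, ρ x * ‖u‖ ^ 2 ≤ iteratedFDeriv ℝ 2 V x ![u, u])
    (ρ₀ : ℝ) (hρ₀ : ∀ x, ρ₀ ≤ ρ x)
    (m : ℝ) (hm : m = ∫ x, ρ x ∂μ) (hmpos : 0 < m)
    (c : EuclideanSpace ℝ (Fin n) → EuclideanSpace ℝ (Fin n) → ℝ≥0∞)
    (hclsc : LowerSemicontinuous
      (fun p : EuclideanSpace ℝ (Fin n) × EuclideanSpace ℝ (Fin n) => c p.1 p.2))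
    (hcsymm : ∀ x y, c x y = c y x) (hcdiag : ∀ x, c x x = 0)
    (L : ℝ≥0∞) (hLdef : L = costLipNorm c ρ) (hLfin : L ≠ ⊤)
    (α : ℝ≥0∞ → ℝ≥0∞) (hαcont : Continuous α) (hαmono : StrictMono α)
    (hα0 : α 0 = 0) (hαfin : ∀ s, s ≠ ⊤ → α s ≠ ⊤)
    (hWI : ∀ f : EuclideanSpace ℝ (Fin n) → ℝ, (∀ x, 0 < f x) → ContDiff ℝ 1 f →
      IsProbabilityMeasure (μ.withDensity fun x => ENNReal.ofReal (f x)) →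
      α (transportCost c (μ.withDensity fun x => ENNReal.ofReal (f x)) μ) ≤
        ∫⁻ x, ENNReal.ofReal (‖gradient (fun y => Real.sqrt (f y)) x‖ ^ 2) ∂μ)
    (r ε : ℝ) (hr : 2 < r) (hε : ε ∈ Set.Ioo (0 : ℝ) 1)
    (hcond : 0 < r * ρ₀ + (α (ENNReal.ofReal ((1 - ε) * m) / L)).toReal) :
    ∀ g : EuclideanSpace ℝ (Fin n) → ℝ, ContDiff ℝ (⊤ : ℕ∞) g → HasCompactSupport g →
      ∫ x, g x ^ 2 ∂μ - (∫ x, g x ∂μ) ^ 2 ≤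
        (1 / min (ε * m) (ρ₀ + (α (ENNReal.ofReal ((1 - ε) * m) / L)).toReal / r)) *
          ∫ x, ‖gradient g x‖ ^ 2 ∂μ := by
  set Z := ∫ y, Real.exp (-V y) with hZ
  have hZpos : 0 < Z := by
    rw [hZ, integral_pos_iff_support_of_nonneg (fun x => (exp_pos _).le) hVint]
    have : Function.support (fun x => Real.exp (-V x)) = Set.univ := by
      ext x; simp [(exp_pos _).ne']
    rw [this]
    exact isOpen_univ.measure_pos volume Set.univ_nonempty
  set W : EuclideanSpace ℝ (Fin n) → ℝ := fun x => V x + Real.log Z with hW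
  have hWcd : ContDiff ℝ 2 W := hV.add contDiff_const
  have hWe : ∀ x, Real.exp (-W x) = Real.exp (-V x) / Z := fun x => by
    rw [hW, neg_add, exp_add, Real.exp_neg (Real.log Z), Real.exp_log hZpos, div_eq_mul_inv]
  have hμW : μ = volume.withDensity (fun x => ENNReal.ofReal (exp (-W x))) := by
    rw [hμ]; simp_rw [hWe]
  haveI : IsProbabilityMeasure μ := by
    constructor
    rw [hμ, withDensity_apply _ MeasurableSet.univ, Measure.restrict_univ, 
      ← ofReal_integral_eq_lintegral_ofReal (hVint.div_const _) (ae_of_all _ fun x => by positivity),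
      integral_div, ← hZ, div_self hZpos.ne', ENNReal.ofReal_one]
  have hHessW : ∀ x u, ρ x * ‖u‖ ^ 2 ≤ iteratedFDeriv ℝ 2 W x ![u, u] := fun x u => by
    refine (hHess x u).trans (le_of_eq ?_)
    have hf : fderiv ℝ W = fderiv ℝ V := by
      ext1 y
      rw [hW, fderiv_add_const]
    rw [iteratedFDeriv_two_apply, iteratedFDeriv_two_apply, hf]
  set lam := min (ε * m) (ρ₀ + (α (ENNReal.ofReal ((1 - ε) * m) / L)).toReal / r) with hlam
  have hl0 : 0 < lam := by
    refine lt_min (mul_pos hε.1 hmpos) ?_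
    have hr0 : 0 < r := by linarith
    have : ρ₀ + (α (ENNReal.ofReal ((1 - ε) * m) / L)).toReal / r = 
      (r * ρ₀ + (α (ENNReal.ofReal ((1 - ε) * m) / L)).toReal) / r := by
      field_simp
    rw [this]
    exact div_pos hcond hr0
  intro g hg hgc
  have hg2 : ContDiff ℝ 2 g := contDiff_infty.1 hg 2
  have h := poincare hWcd hμW lam hl0 (fun X hX hXc => 
    (FI ρ μ hρcont ρ₀ hρ₀ m hm hmpos c hclsc L hLdef hLfin α hαmono hWI r ε hr hε lam hl0 hlam X 
      (fun i => (hX i).of_le (by norm_num)) hXc).trans 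
    (bochner hWcd hμW hρcont hHessW X hX hXc)) g hg2 hgc
  simp_rw [norm_grad_sq]
  rw [one_div, ← div_eq_inv_mul, le_div_iff₀ hl0, mul_comm]
  exact h
end

section
/- Let (Ω, P) be a probability space, S : Ω → ℝ measurable, and let t > 0, λ > 0, m > 0, u₀ ∈ ℝ, L > 0, K ≥ 0, and α : [0,∞) → [0,∞). Assume S ≥ u₀·t almost surely, and that for every R > 0, P(m·t − S ≥ R·t) ≤ K·e^{−t·α(R/L)}. Then for every ε ∈ (0,1), E[e^{−λS}] ≤ (1 + K)·max(e^{−λ·ε·m·t}, e^{−t(λ·u₀ + α((1−ε)m/L))}). -/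
open MeasureTheory Real Set
open scoped ENNReal

/-- Abstract deviation-to-Laplace-transform bound: if `S ≥ u₀·t` a.s. and
deviations of `m·t - S` have exponential tails governed by `α`, then the Laplace transform
`E[e^{-λS}]` is controlled. -/
theorem stmt_5 {Ω : Type*} [MeasurableSpace Ω] (P : Measure Ω) [IsProbabilityMeasure P]
    (S : Ω → ℝ) (hS : Measurable S)
    (t lam m u₀ L K : ℝ) (ht : 0 < t) (hlam : 0 < lam) (hm : 0 < m) (hL : 0 < L)
    (hK : 0 ≤ K)
    (α : ℝ → ℝ) (hα : ∀ x, 0 ≤ x → 0 ≤ α x)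
    (hlow : ∀ᵐ ω ∂P, u₀ * t ≤ S ω)
    (hdev : ∀ R, 0 < R →
      P {ω | R * t ≤ m * t - S ω} ≤ ENNReal.ofReal (K * Real.exp (-t * α (R / L)))) :
    ∀ ε ∈ Set.Ioo (0 : ℝ) 1,
      ∫ ω, Real.exp (-lam * S ω) ∂P ≤
        (1 + K) * max (Real.exp (-(lam * ε * m * t)))
          (Real.exp (-(t * (lam * u₀ + α ((1 - ε) * m / L))))) := by
  intro ε hε
  obtain ⟨h0, h1⟩ := hε
  have hR : 0 < (1 - ε) * m := mul_pos (by linarith) hm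
  have hd := hdev _ hR
  set A : Set Ω := {ω | (1 - ε) * m * t ≤ m * t - S ω} with hA
  have hAm : MeasurableSet A := measurableSet_le measurable_const (measurable_const.sub hS)
  have hreal : P.real A ≤ K * Real.exp (-t * α ((1 - ε) * m / L)) :=
    ENNReal.toReal_le_of_le_ofReal (by positivity) hd
  have hint : Integrable (A.indicator fun _ : Ω => Real.exp (-lam * (u₀ * t))) P :=
    (integrable_const _).indicator hAm
  have key : ∫ ω, Real.exp (-lam * S ω) ∂P ≤
      ∫ ω, (Real.exp (-(lam * ε * m * t)) +
        A.indicator (fun _ : Ω => Real.exp (-lam * (u₀ * t))) ω) ∂P := by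
    refine integral_mono_of_nonneg (Filter.Eventually.of_forall fun ω => (Real.exp_pos _).le)
      ((integrable_const _).add hint) ?_
    filter_upwards [hlow] with ω hω
    by_cases h : ω ∈ A
    · rw [Set.indicator_of_mem h]
      have : Real.exp (-lam * S ω) ≤ Real.exp (-lam * (u₀ * t)) :=
        Real.exp_le_exp.2 (by nlinarith)
      have := Real.exp_pos (-(lam * ε * m * t))
      linarith
    · rw [Set.indicator_of_notMem h, add_zero]
      have h' : m * t - S ω < (1 - ε) * m * t := not_le.1 h
      apply Real.exp_le_exp.2
      have : ε * m * t ≤ S ω := by linarith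
      nlinarith
  rw [integral_add (integrable_const _) hint, integral_indicator_const _ hAm] at key
  simp only [integral_const, probReal_univ, one_smul, smul_eq_mul] at key
  have e : Real.exp (-(t * (lam * u₀ + α ((1 - ε) * m / L)))) =
      Real.exp (-t * α ((1 - ε) * m / L)) * Real.exp (-lam * (u₀ * t)) := by
    rw [← Real.exp_add]; congr 1; ring
  have h2 := mul_le_mul_of_nonneg_right hreal (Real.exp_pos (-lam * (u₀ * t))).le
  rw [mul_assoc, ← e] at h2
  have h3 := mul_le_mul_of_nonneg_left (le_max_right (Real.exp (-(lam * ε * m * t)))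
    (Real.exp (-(t * (lam * u₀ + α ((1 - ε) * m / L)))))) hK
  have h4 := le_max_left (Real.exp (-(lam * ε * m * t)))
    (Real.exp (-(t * (lam * u₀ + α ((1 - ε) * m / L)))))
  linarith
end

section
/- Let P and Q be probability measures on a measurable space and A a measurable set with Q(A) > 0. Then P(A) · log(1 + 1/Q(A)) ≤ log 2 + H(P|Q), where H(P|Q) is the relative entropy (Kullback–Leibler divergence) of P with respect to Q (equal to +∞ if P is not absolutely continuous with respect to Q). -/
open MeasureTheory
open scoped ENNReal Classical

/-- The relative entropy (Kullback–Leibler divergence) `H(P|Q) = ∫ log(dP/dQ) dP`,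
equal to `+∞` if `P` is not absolutely continuous w.r.t. `Q` (or the log-likelihood
ratio is not integrable). -/
noncomputable def relEntropy {Ω : Type*} [MeasurableSpace Ω]
    (P Q : MeasureTheory.Measure Ω) : EReal :=
  if P ≪ Q ∧ MeasureTheory.Integrable (MeasureTheory.llr P Q) P
  then ((∫ x, MeasureTheory.llr P Q x ∂P : ℝ) : EReal)
  else ⊤

/-- The entropy inequality for events:
`P(A)·log(1 + 1/Q(A)) ≤ log 2 + H(P|Q)`. -/
theorem stmt_6 {Ω : Type*} [MeasurableSpace Ω] (P Q : Measure Ω)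
    [IsProbabilityMeasure P] [IsProbabilityMeasure Q]
    (A : Set Ω) (hA : MeasurableSet A) (hQA : 0 < Q A) :
    ((P A).toReal * Real.log (1 + 1 / (Q A).toReal) : EReal) ≤
      (Real.log 2 : EReal) + relEntropy P Q := by
  unfold relEntropy
  split_ifs with h
  swap
  · rw [EReal.coe_add_top]; exact le_top
  obtain ⟨hac, hint⟩ := h
  have hq : 0 < (Q A).toReal := ENNReal.toReal_pos hQA.ne' (measure_ne_top _ _)
  set q := (Q A).toReal with hqdef
  set c := Real.log (1 + 1 / q) with hc
  have hec : Real.exp c = 1 + 1 / q := Real.exp_log (by positivity)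
  set f : Ω → ℝ := A.indicator (fun _ => c) with hf
  have hexp : (fun x => Real.exp (f x)) = fun x => 1 + A.indicator (fun _ => 1 / q) x := by
    funext x
    by_cases hx : x ∈ A <;> simp [hf, hx, hec]
  have hi0 : Integrable (A.indicator (fun _ => 1 / q)) Q :=
    (integrable_const _).indicator hA
  have hie : Integrable (fun x => Real.exp (f x)) Q := by
    rw [hexp]; exact (integrable_const _).add hi0
  have hfP : Integrable f P := (integrable_const _).indicator hA
  have hI : ∫ x, Real.exp (f x) ∂Q = 2 := by
    rw [hexp, integral_add (integrable_const _) hi0, integral_indicator_const _ hA]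
    simp only [integral_const, Measure.real, measure_univ, ← hqdef]
    simp
    field_simp
    norm_num
  have hIf : ∫ x, f x ∂P = (P A).toReal * c := by
    rw [hf, integral_indicator_const _ hA]; rfl
  have hac' : P ≪ Q.tilted f := hac.trans (absolutelyContinuous_tilted hie)
  haveI := isProbabilityMeasure_tilted hie
  have h1 := InformationTheory.integral_llr_add_sub_measure_univ_nonneg hac'
    (integrable_llr_tilted_right hac hfP hint hie)
  rw [integral_llr_tilted_right hac hfP hie hint, hI, hIf] at h1
  simp only [Measure.real, measure_univ] at h1
  rw [← EReal.coe_mul, ← EReal.coe_add, EReal.coe_le_coe_iff]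
  linarith
end

section
/- Let P and Q be probability measures on a measurable space with P absolutely continuous with respect to Q, let A be a measurable set and λ ≥ 0. Then λ·P(A) ≤ log(1 + (e^λ − 1)·Q(A)) + H(P|Q), where H(P|Q) is the relative entropy of P with respect to Q. -/
open MeasureTheory
open scoped ENNReal Classical

/-- Donsker–Varadhan applied to `f = λ·1_A`:
`λ·P(A) ≤ log(1 + (e^λ - 1)·Q(A)) + H(P|Q)`. -/
theorem stmt_7 {Ω : Type*} [MeasurableSpace Ω] (P Q : Measure Ω)
    [IsProbabilityMeasure P] [IsProbabilityMeasure Q] (hPQ : P ≪ Q)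
    (A : Set Ω) (hA : MeasurableSet A) (lam : ℝ) (hlam : 0 ≤ lam) :
    (lam * (P A).toReal : EReal) ≤
      (Real.log (1 + (Real.exp lam - 1) * (Q A).toReal) : EReal) + relEntropy P Q := by
  unfold relEntropy
  split_ifs with h
  swap
  · rw [EReal.coe_add_top]
    exact le_top
  obtain ⟨-, hint⟩ := h
  have hexp : (fun x => Real.exp (A.indicator (fun _ => lam) x)) =
      fun x => 1 + A.indicator (fun _ => Real.exp lam - 1) x := by
    funext x
    by_cases hx : x ∈ A <;> simp [hx]
  have hi : ∀ (c : ℝ) (μ : Measure Ω) [IsProbabilityMeasure μ],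
      Integrable (A.indicator (fun _ => c)) μ := fun c μ _ =>
    (integrable_const c).indicator hA
  have hfQ : Integrable (fun x => Real.exp (A.indicator (fun _ => lam) x)) Q := by
    rw [hexp]
    exact (integrable_const 1).add (hi _ Q)
  have hfP := hi lam P
  have : IsProbabilityMeasure (Q.tilted (A.indicator (fun _ => lam))) :=
    isProbabilityMeasure_tilted hfQ
  have hac : P ≪ Q.tilted (A.indicator (fun _ => lam)) :=
    hPQ.trans (absolutelyContinuous_tilted hfQ)
  have h1 := InformationTheory.integral_llr_add_sub_measure_univ_nonneg hac
    (integrable_llr_tilted_right hPQ hfP hint hfQ)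
  rw [integral_llr_tilted_right hPQ hfP hfQ hint, hexp,
    integral_add (integrable_const 1) (hi _ Q),
    integral_indicator_const _ hA, integral_indicator_const _ hA] at h1
  simp only [probReal_univ, integral_const, smul_eq_mul, mul_one, one_mul] at h1
  rw [← EReal.coe_mul, ← EReal.coe_add, EReal.coe_le_coe_iff]
  change lam * P.real A ≤ Real.log (1 + (Real.exp lam - 1) * Q.real A) + _
  rw [mul_comm lam, mul_comm (Real.exp lam - 1)]
  linarith
end

section
/- Let V : ℝⁿ → ℝ be C² and ρ : ℝⁿ → ℝ continuous such that ⟨u, Hess V(z) u⟩ ≥ ρ(z)‖u‖² for all z, u ∈ ℝⁿ. Let x, y : [0,T] → ℝⁿ be differentiable curves satisfying x'(t) − y'(t) = −(∇V(x(t)) − ∇V(y(t))) for all t ∈ [0,T]. Then for every t ∈ [0,T], ‖x(t) − y(t)‖ ≤ ‖x(0) − y(0)‖ · exp(−∫₀ᵗ ∫₀¹ ρ(λ·x(s) + (1−λ)·y(s)) dλ ds). -/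
open MeasureTheory Real Set
open scoped RealInnerProductSpace

theorem aux_grad {n : ℕ} (V ρ : EuclideanSpace ℝ (Fin n) → ℝ)
    (hV : ContDiff ℝ 2 V) (hρ : Continuous ρ)
    (hHess : ∀ z u : EuclideanSpace ℝ (Fin n),
      ρ z * ‖u‖ ^ 2 ≤ iteratedFDeriv ℝ 2 V z ![u, u])
    (a b : EuclideanSpace ℝ (Fin n)) :
    (∫ l in (0 : ℝ)..1, ρ (l • a + (1 - l) • b)) * ‖a - b‖ ^ 2 ≤
      ⟪gradient V a - gradient V b, a - b⟫ := by
  have h1 : ContDiff ℝ 1 (fderiv ℝ V) := hV.fderiv_right (by norm_num)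
  have h2 : Continuous (fderiv ℝ (fderiv ℝ V)) := h1.continuous_fderiv (by norm_num)
  have hd : ∀ l : ℝ, HasDerivAt (fun l : ℝ => l • a + (1 - l) • b) (a - b) l := by
    intro l
    have := ((hasDerivAt_id l).smul_const a).add
      (((hasDerivAt_const l (1:ℝ)).sub (hasDerivAt_id l)).smul_const b)
    have e : a - b = (1:ℝ) • a + ((0:ℝ) - 1) • b := by
      rw [one_smul, zero_sub, neg_smul, one_smul, sub_eq_add_neg]
    rw [e]
    exact this
  have hφ : ∀ l : ℝ, HasDerivAt (fun l : ℝ => fderiv ℝ V (l • a + (1 - l) • b) (a - b))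
      (fderiv ℝ (fderiv ℝ V) (l • a + (1 - l) • b) (a - b) (a - b)) l := by
    intro l
    have h3 := ((h1.differentiable (by norm_num)) (l • a + (1 - l) • b)).hasFDerivAt
    have h4 := h3.comp_hasDerivAt l (hd l)
    have := h4.clm_apply (hasDerivAt_const l (a - b))
    simpa using this
  have hc : Continuous (fun l : ℝ => fderiv ℝ (fderiv ℝ V) (l • a + (1 - l) • b) (a - b) (a - b)) := by
    have : Continuous (fun l : ℝ => fderiv ℝ (fderiv ℝ V) (l • a + (1 - l) • b)) :=
      h2.comp (by fun_prop)
    fun_prop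
  have hFTC := intervalIntegral.integral_eq_sub_of_hasDerivAt (a := 0) (b := 1)
    (fun l _ => hφ l) (hc.intervalIntegrable _ _)
  have hr : ⟪gradient V a - gradient V b, a - b⟫ = fderiv ℝ V a (a - b) - fderiv ℝ V b (a - b) := by
    rw [inner_sub_left]
    simp only [gradient, InnerProductSpace.toDual_symm_apply]
  rw [hr]
  simp only [one_smul, sub_self, zero_smul, add_zero, sub_zero, zero_add] at hFTC
  rw [← hFTC, ← intervalIntegral.integral_mul_const]
  apply intervalIntegral.integral_mono_on (by norm_num)
  · exact Continuous.intervalIntegrable (by fun_prop) _ _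
  · exact hc.intervalIntegrable _ _
  · intro l _
    have := hHess (l • a + (1 - l) • b) (a - b)
    rw [iteratedFDeriv_two_apply] at this
    simpa using this

/-- Pathwise contraction for the synchronous coupling under the variable
curvature lower bound `Hess V ≥ ρ`. -/
theorem stmt_10 {n : ℕ} (V ρ : EuclideanSpace ℝ (Fin n) → ℝ)
    (hV : ContDiff ℝ 2 V) (hρ : Continuous ρ)
    (hHess : ∀ z u : EuclideanSpace ℝ (Fin n),
      ρ z * ‖u‖ ^ 2 ≤ iteratedFDeriv ℝ 2 V z ![u, u])
    (T : ℝ) (hT : 0 ≤ T)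
    (x y x' y' : ℝ → EuclideanSpace ℝ (Fin n))
    (hx : ∀ t ∈ Set.Icc 0 T, HasDerivAt x (x' t) t)
    (hy : ∀ t ∈ Set.Icc 0 T, HasDerivAt y (y' t) t)
    (hode : ∀ t ∈ Set.Icc 0 T,
      x' t - y' t = -(gradient V (x t) - gradient V (y t))) :
    ∀ t ∈ Set.Icc 0 T,
      ‖x t - y t‖ ≤ ‖x 0 - y 0‖ *
        Real.exp (-∫ s in (0 : ℝ)..t,
          ∫ l in (0 : ℝ)..1, ρ (l • x s + (1 - l) • y s)) := by
  obtain ⟨X, hX, hXe⟩ : ∃ X : ℝ → EuclideanSpace ℝ (Fin n), Continuous X ∧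
      ∀ t ∈ Set.Icc 0 T, X t = x t :=
    ⟨Set.IccExtend hT ((Set.Icc 0 T).domRestrict x),
      (continuousOn_iff_continuous_domRestrict.1
        (fun t ht => (hx t ht).continuousAt.continuousWithinAt)).Icc_extend',
      fun t ht => by rw [Set.IccExtend_of_mem _ _ ht]; rfl⟩
  obtain ⟨Y, hY, hYe⟩ : ∃ X : ℝ → EuclideanSpace ℝ (Fin n), Continuous X ∧
      ∀ t ∈ Set.Icc 0 T, X t = y t :=
    ⟨Set.IccExtend hT ((Set.Icc 0 T).domRestrict y),
      (continuousOn_iff_continuous_domRestrict.1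
        (fun t ht => (hy t ht).continuousAt.continuousWithinAt)).Icc_extend',
      fun t ht => by rw [Set.IccExtend_of_mem _ _ ht]; rfl⟩
  set R : ℝ → ℝ := fun s => ∫ l in (0 : ℝ)..1, ρ (l • X s + (1 - l) • Y s) with hR
  have hRc : Continuous R := by
    apply intervalIntegral.continuous_parametric_intervalIntegral_of_continuous'
    simp only [Function.uncurry_def]
    fun_prop
  have hI : ∀ t : ℝ, HasDerivAt (fun t => ∫ s in (0:ℝ)..t, R s) (R t) t := fun t =>
    intervalIntegral.integral_hasDerivAt_right (hRc.intervalIntegrable _ _)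
      (hRc.stronglyMeasurableAtFilter _ _) hRc.continuousAt
  set g : ℝ → ℝ := fun t => ‖x t - y t‖ ^ 2 * Real.exp (2 * ∫ s in (0:ℝ)..t, R s) with hg
  have hgd : ∀ t ∈ Set.Icc 0 T, HasDerivAt g
      (2 * ⟪x t - y t, x' t - y' t⟫ * Real.exp (2 * ∫ s in (0:ℝ)..t, R s) +
        ‖x t - y t‖ ^ 2 * (Real.exp (2 * ∫ s in (0:ℝ)..t, R s) * (2 * R t))) t := fun t ht =>
    ((hx t ht).sub (hy t ht)).norm_sq.mul ((hI t).const_mul 2).exp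
  have hanti : AntitoneOn g (Set.Icc 0 T) := by
    apply antitoneOn_of_deriv_nonpos (convex_Icc 0 T)
    · exact fun t ht => (hgd t ht).continuousAt.continuousWithinAt
    · exact fun t ht => (hgd t (interior_subset ht)).differentiableAt.differentiableWithinAt
    · intro t ht
      have ht := interior_subset ht
      rw [(hgd t ht).deriv, hode t ht, inner_neg_right, real_inner_comm]
      have := aux_grad V ρ hV hρ hHess (x t) (y t)
      have hRt : R t = ∫ l in (0 : ℝ)..1, ρ (l • x t + (1 - l) • y t) := by
        simp only [hR, hXe t ht, hYe t ht]
      rw [← hRt] at this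
      have he := Real.exp_pos (2 * ∫ s in (0:ℝ)..t, R s)
      nlinarith [mul_le_mul_of_nonneg_right this he.le]
  intro t ht
  have hint : (∫ s in (0 : ℝ)..t, ∫ l in (0 : ℝ)..1, ρ (l • x s + (1 - l) • y s)) =
      ∫ s in (0:ℝ)..t, R s := by
    apply intervalIntegral.integral_congr
    intro s hs
    rw [Set.uIcc_of_le ht.1] at hs
    have hs' : s ∈ Set.Icc 0 T := ⟨hs.1, hs.2.trans ht.2⟩
    simp only [hR, hXe s hs', hYe s hs']
  rw [hint]
  have h := hanti (Set.left_mem_Icc.2 hT) ht ht.1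
  simp only [hg, intervalIntegral.integral_same, mul_zero, Real.exp_zero, mul_one] at h
  rw [two_mul, Real.exp_add, ← sq, ← mul_pow] at h
  have h' := (pow_le_pow_iff_left₀ (by positivity) (norm_nonneg _) two_ne_zero).1 h
  rw [Real.exp_neg, ← div_eq_mul_inv, le_div_iff₀ (Real.exp_pos _)]
  exact h'
end

section
/- Let E be a finite-dimensional real inner product space, t > 0, and A : [0,t] → (E →L E) a Bochner-integrable family of self-adjoint continuous linear operators. Let r : [0,t] → ℝ be integrable with ⟨u, A(s)u⟩ ≥ r(s)‖u‖² for all u ∈ E and all s ∈ [0,t]. Set B = ∫₀ᵗ A(s) ds. Then for every u ∈ E, ⟨u, exp(−2B) u⟩ ≤ exp(−2 ∫₀ᵗ r(s) ds) · ‖u‖². -/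
open MeasureTheory Real Set
open scoped RealInnerProductSpace

theorem exp_apply_eigen {E : Type*} [NormedAddCommGroup E] [InnerProductSpace ℝ E]
    [FiniteDimensional ℝ E] (T : E →L[ℝ] E) (v : E) (m : ℝ) (h : T v = m • v) :
    NormedSpace.exp T v = Real.exp m • v := by
  have : CompleteSpace E := FiniteDimensional.complete ℝ E
  have h1 := NormedSpace.exp_series_hasSum_exp' (𝕂 := ℝ) T
  have h2 := (ContinuousLinearMap.apply ℝ E v).hasSum h1
  have h3 := NormedSpace.exp_series_hasSum_exp' (𝕂 := ℝ) m
  have h4 := h3.smul_const v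
  rw [← Real.exp_eq_exp_ℝ] at h4
  have hp : ∀ n : ℕ, (T ^ n) v = m ^ n • v := by
    intro n
    induction n with
    | zero => simp
    | succ k ih =>
      rw [pow_succ, mul_apply_eq_comp, h, map_smul, ih, smul_smul, pow_succ, mul_comm]
  refine HasSum.unique h2 ?_
  convert h4 using 2 with n
  simp [hp, smul_smul]

/-- If a family of self-adjoint operators `A(s)` satisfies
`⟨u, A(s)u⟩ ≥ r(s)‖u‖²`, then `⟨u, exp(-2∫A)u⟩ ≤ exp(-2∫r)‖u‖²`. -/
theorem stmt_11 {E : Type*} [NormedAddCommGroup E] [InnerProductSpace ℝ E]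
    [FiniteDimensional ℝ E]
    (t : ℝ) (ht : 0 < t)
    (A : ℝ → E →L[ℝ] E) (hA : IntegrableOn A (Set.Icc 0 t))
    (hself : ∀ s ∈ Set.Icc (0 : ℝ) t, ∀ u v : E, ⟪A s u, v⟫ = ⟪u, A s v⟫)
    (r : ℝ → ℝ) (hr : IntegrableOn r (Set.Icc 0 t))
    (hlow : ∀ s ∈ Set.Icc (0 : ℝ) t, ∀ u : E, r s * ‖u‖ ^ 2 ≤ ⟪u, A s u⟫)
    (B : E →L[ℝ] E) (hB : B = ∫ s in (0 : ℝ)..t, A s) :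
    ∀ u : E, ⟪u, NormedSpace.exp ((-2 : ℝ) • B) u⟫ ≤
      Real.exp (-2 * ∫ s in (0 : ℝ)..t, r s) * ‖u‖ ^ 2 := by
  intro u
  have : CompleteSpace E := FiniteDimensional.complete ℝ E
  have hAi : IntervalIntegrable A volume 0 t :=
    (intervalIntegrable_iff_integrableOn_Icc_of_le ht.le).2 hA
  have hri : IntervalIntegrable r volume 0 t :=
    (intervalIntegrable_iff_integrableOn_Icc_of_le ht.le).2 hr
  have key : ∀ x y : E, IntervalIntegrable (fun s => ⟪x, A s y⟫) volume 0 t ∧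
      ⟪x, B y⟫ = ∫ s in (0 : ℝ)..t, ⟪x, A s y⟫ := by
    intro x y
    let L : (E →L[ℝ] E) →L[ℝ] ℝ := (innerSL ℝ x).comp (ContinuousLinearMap.apply ℝ E y)
    have hL : ∀ T, L T = ⟪x, T y⟫ := fun T => rfl
    constructor
    · rw [intervalIntegrable_iff] at hAi ⊢
      exact L.integrable_comp hAi
    · rw [hB, ← hL, ← L.intervalIntegral_comp_comm hAi]
      rfl
  have hsym : (B : E →ₗ[ℝ] E).IsSymmetric := by
    intro x y
    change ⟪B x, y⟫ = ⟪x, B y⟫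
    rw [real_inner_comm, (key y x).2, (key x y).2]
    refine intervalIntegral.integral_congr fun s hs => ?_
    rw [uIcc_of_le ht.le] at hs
    change ⟪y, A s x⟫ = ⟪x, A s y⟫
    rw [← hself s hs x y, real_inner_comm]
  have hBlow : ∀ x : E, (∫ s in (0 : ℝ)..t, r s) * ‖x‖ ^ 2 ≤ ⟪x, B x⟫ := by
    intro x
    rw [(key x x).2, ← intervalIntegral.integral_mul_const]
    exact intervalIntegral.integral_mono_on ht.le (hri.mul_const _) (key x x).1
      fun s hs => hlow s hs x
  set b := hsym.eigenvectorBasis rfl with hb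
  set l := hsym.eigenvalues rfl with hl
  have hbe : ∀ i, B (b i) = l i • b i := fun i => hsym.apply_eigenvectorBasis rfl i
  have hle : ∀ i, (∫ s in (0 : ℝ)..t, r s) ≤ l i := by
    intro i
    have h := hBlow (b i)
    rw [hbe, inner_smul_right, real_inner_self_eq_norm_sq, b.norm_eq_one] at h
    simpa using h
  have hexp : ∀ i, NormedSpace.exp ((-2 : ℝ) • B) (b i) = Real.exp (-2 * l i) • b i := by
    intro i
    apply exp_apply_eigen
    simp [hbe, smul_smul]
  have e1 : ⟪u, NormedSpace.exp ((-2 : ℝ) • B) u⟫ = ∑ i, Real.exp (-2 * l i) * ⟪b i, u⟫ ^ 2 := by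
    have e0 : NormedSpace.exp ((-2 : ℝ) • B) u =
        NormedSpace.exp ((-2 : ℝ) • B) (∑ i, ⟪b i, u⟫ • b i) := by rw [b.sum_repr' u]
    rw [e0, map_sum, inner_sum]
    refine Finset.sum_congr rfl fun i _ => ?_
    rw [map_smul, hexp, inner_smul_right, inner_smul_right, real_inner_comm u]
    ring
  rw [e1, ← b.sum_sq_inner_right u, Finset.mul_sum]
  refine Finset.sum_le_sum fun i _ => ?_
  have := hle i
  gcongr ?_ * _
  exact Real.exp_le_exp.2 (by linarith)
end

section
/- Let g : [0,∞) → ℝ be convex and differentiable, and define V : ℝⁿ → ℝ by V(x) = g(‖x‖²). Then for all x, y ∈ ℝⁿ, ⟨∇V(x) − ∇V(y), x − y⟩ ≥ (g'(‖x‖²) + g'(‖y‖²)) · ‖x − y‖², where ∇V(x) = 2 g'(‖x‖²) x. -/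
open MeasureTheory Real Set
open scoped RealInnerProductSpace

/-- Radial potentials `V(x) = g(‖x‖²)` with `g` convex and differentiable
on `[0,∞)` satisfy the reinforced curvature condition with `κ(x) = g'(‖x‖²)`, and
`∇V(x) = 2g'(‖x‖²)·x`. -/
theorem stmt_14 {n : ℕ} (g g' : ℝ → ℝ)
    (hconv : ConvexOn ℝ (Set.Ici 0) g)
    (hg' : ∀ s ∈ Set.Ici (0 : ℝ), HasDerivWithinAt g (g' s) (Set.Ici 0) s)
    (V : EuclideanSpace ℝ (Fin n) → ℝ) (hV : ∀ x, V x = g (‖x‖ ^ 2)) :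
    (∀ x : EuclideanSpace ℝ (Fin n), gradient V x = (2 * g' (‖x‖ ^ 2)) • x) ∧
    ∀ x y : EuclideanSpace ℝ (Fin n),
      (g' (‖x‖ ^ 2) + g' (‖y‖ ^ 2)) * ‖x - y‖ ^ 2 ≤
        ⟪gradient V x - gradient V y, x - y⟫ := by
  have hgrad : ∀ x : EuclideanSpace ℝ (Fin n), gradient V x = (2 * g' (‖x‖ ^ 2)) • x := by
    intro x
    have hVe : V = g ∘ (fun x => ‖x‖ ^ 2) := funext hV
    have h1 : HasFDerivWithinAt (fun x : EuclideanSpace ℝ (Fin n) => ‖x‖ ^ 2)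
        (2 • innerSL ℝ x) Set.univ x :=
      (hasStrictFDerivAt_norm_sq x).hasFDerivAt.hasFDerivWithinAt
    have h2 := (hg' (‖x‖ ^ 2) (Set.mem_Ici.2 (sq_nonneg _))).comp_hasFDerivWithinAt x h1
      (fun y _ => Set.mem_Ici.2 (sq_nonneg ‖y‖))
    rw [hasFDerivWithinAt_univ, ← hVe] at h2
    apply HasGradientAt.gradient
    rw [hasGradientAt_iff_hasFDerivAt]
    have he : InnerProductSpace.toDual ℝ (EuclideanSpace ℝ (Fin n)) ((2 * g' (‖x‖ ^ 2)) • x)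
        = g' (‖x‖ ^ 2) • 2 • innerSL ℝ x := by
      refine ContinuousLinearMap.ext fun z => ?_
      rw [InnerProductSpace.toDual_apply_apply, real_inner_smul_left]
      change _ = g' (‖x‖ ^ 2) • (2 • inner ℝ x z)
      simp only [smul_eq_mul, nsmul_eq_mul]
      push_cast
      ring
    rw [he]
    exact h2
  refine ⟨hgrad, fun x y => ?_⟩
  have key : ∀ s t : ℝ, 0 ≤ s → s < t → g' s ≤ g' t := fun s t hs hst =>
    (hconv.le_slope_of_hasDerivWithinAt hs (hs.trans hst.le) hst (hg' s hs)).trans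
      (hconv.slope_le_of_hasDerivWithinAt hs (hs.trans hst.le) hst (hg' t (hs.trans hst.le)))
  have hm : 0 ≤ (g' (‖x‖ ^ 2) - g' (‖y‖ ^ 2)) * (‖x‖ ^ 2 - ‖y‖ ^ 2) := by
    rcases lt_trichotomy (‖x‖ ^ 2) (‖y‖ ^ 2) with h | h | h
    · have := key _ _ (sq_nonneg _) h
      exact mul_nonneg_of_nonpos_of_nonpos (by linarith) (by linarith)
    · simp [h]
    · have := key _ _ (sq_nonneg _) h
      exact mul_nonneg (by linarith) (by linarith)
  rw [hgrad, hgrad, norm_sub_sq_real]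
  simp only [inner_sub_left, inner_sub_right, real_inner_smul_left, real_inner_self_eq_norm_sq,
    real_inner_comm x y]
  linarith
end

section
/- Let V : ℝⁿ → ℝ be C² and u ∈ ℝⁿ. Assume that x ↦ ⟨u, Hess V(x) u⟩ e^{−V(x)} and x ↦ ⟨u, ∇V(x)⟩² e^{−V(x)} are integrable on ℝⁿ, and that ⟨u, ∇V(x)⟩ e^{−V(x)} → 0 as ‖x‖ → ∞. Then ∫ ⟨u, Hess V(x) u⟩ e^{−V(x)} dx = ∫ ⟨u, ∇V(x)⟩² e^{−V(x)} dx; in particular this integral is nonnegative. -/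
open MeasureTheory Real Set Filter
open scoped RealInnerProductSpace

lemma aux_prod {E : Type*} [NormedAddCommGroup E] [NormedSpace ℝ E] [MeasurableSpace E]
    [BorelSpace E] [FiniteDimensional ℝ E] {μ : Measure (E × ℝ)} [μ.IsAddHaarMeasure]
    {g g' : E × ℝ → ℝ} (hi : Integrable g' μ)
    (hg : ∀ x, HasLineDerivAt ℝ g (g' x) x (0, 1))
    (hd : Tendsto g (cocompact _) (nhds 0)) : ∫ x, g' x ∂μ = 0 := by
  let ν : Measure E := Measure.addHaar
  have A : ν.prod volume = (Measure.addHaarScalarFactor (ν.prod volume) μ) • μ :=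
    Measure.isAddLeftInvariant_eq_smul _ _
  have Hi : Integrable g' (ν.prod volume) := by
    rw [A]; exact hi.smul_measure_nnreal
  have H : ∫ x, g' x ∂(ν.prod volume) = 0 := by
    rw [integral_prod _ Hi]
    apply integral_eq_zero_of_ae
    filter_upwards [Hi.prod_right_ae] with x hx
    have hc : Tendsto (fun t : ℝ => (x, t)) (cocompact ℝ) (cocompact (E × ℝ)) := by
      apply Topology.IsClosedEmbedding.tendsto_cocompact
      exact (isometry_iff_dist_eq.2 (by intro a b; simp [Prod.dist_eq])).isClosedEmbedding
    have hc' := hd.comp hc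
    have hder : ∀ t : ℝ, HasDerivAt (fun t => g (x, t)) (g' (x, t)) t := by
      intro t
      convert! (hg (x, t)).scomp_of_eq t ((hasDerivAt_id t).add (hasDerivAt_const t (-t)))
        (by simp) <;> simp
    have := integral_of_hasDerivAt_of_tendsto hder hx
      (hc'.mono_left atBot_le_cocompact) (hc'.mono_left atTop_le_cocompact)
    simpa using this
  rw [Measure.isAddLeftInvariant_eq_smul μ (ν.prod volume)]
  simp [H]

lemma aux_gen {E : Type*} [NormedAddCommGroup E] [NormedSpace ℝ E] [MeasurableSpace E]
    [BorelSpace E] [FiniteDimensional ℝ E] {μ : Measure E} [μ.IsAddHaarMeasure]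
    {g g' : E → ℝ} {v : E} (hi : Integrable g' μ)
    (hg : ∀ x, HasLineDerivAt ℝ g (g' x) x v)
    (hd : Tendsto g (cocompact _) (nhds 0)) : ∫ x, g' x ∂μ = 0 := by
  rcases eq_or_ne v 0 with rfl | hv
  · have Hg' x : g' x = 0 := by
      simp [(hasLineDerivAt_zero (f := g) (x := x)).lineDeriv, (hg x).lineDeriv.symm]
    simp [Hg']
  have : Nontrivial E := nontrivial_iff.2 ⟨v, 0, hv⟩
  let n := Module.finrank ℝ E
  let E' := Fin (n - 1) → ℝ
  obtain ⟨L, hL⟩ : ∃ L : E ≃L[ℝ] (E' × ℝ), L v = (0, 1) := by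
    have : Module.finrank ℝ (E' × ℝ) = n := by
      simpa [this, E'] using Nat.sub_add_cancel Module.finrank_pos
    have L₀ : E ≃L[ℝ] (E' × ℝ) := (ContinuousLinearEquiv.ofFinrankEq this).symm
    obtain ⟨M, hM⟩ : ∃ M : (E' × ℝ) ≃L[ℝ] (E' × ℝ), M (L₀ v) = (0, 1) := by
      apply SeparatingDual.exists_continuousLinearEquiv_apply_eq
      · simpa using hv
      · simp
    exact ⟨L₀.trans M, by simp [hM]⟩
  let ν := Measure.map L μ
  have hLs : Topology.IsClosedEmbedding L.symm := L.symm.toHomeomorph.isClosedEmbedding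
  suffices H : ∫ (x : E' × ℝ), g' (L.symm x) ∂ν = 0 by
    have : μ = Measure.map L.symm ν := by
      simp [ν, Measure.map_map L.symm.continuous.measurable L.continuous.measurable]
    rw [this, hLs.integral_map]
    exact H
  have L_emb : MeasurableEmbedding L := L.toHomeomorph.measurableEmbedding
  apply aux_prod (g := fun x => g (L.symm x))
  · simpa [ν, L_emb.integrable_map_iff, Function.comp_def] using hi
  · intro x
    have : g = (g ∘ L.symm) ∘ (L : E →ₗ[ℝ] (E' × ℝ)) := by ext y; simp
    specialize hg (L.symm x)
    rw [this] at hg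
    convert! hg.of_comp using 1
    · simp
    · simp [← hL]
  · exact hd.comp hLs.tendsto_cocompact

/-- Multidimensional integration by parts in a fixed direction `u`:
`∫ ⟨u, Hess V(x) u⟩ e^{-V} dx = ∫ ⟨u, ∇V(x)⟩² e^{-V} dx ≥ 0`. -/
theorem stmt_16 {n : ℕ} (V : EuclideanSpace ℝ (Fin n) → ℝ) (hV : ContDiff ℝ 2 V)
    (u : EuclideanSpace ℝ (Fin n))
    (h1 : Integrable (fun x => iteratedFDeriv ℝ 2 V x ![u, u] * Real.exp (-V x)))
    (h2 : Integrable (fun x => ⟪u, gradient V x⟫ ^ 2 * Real.exp (-V x)))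
    (hdecay : Tendsto (fun x => ⟪u, gradient V x⟫ * Real.exp (-V x))
      (Bornology.cobounded (EuclideanSpace ℝ (Fin n))) (nhds 0)) :
    (∫ x, iteratedFDeriv ℝ 2 V x ![u, u] * Real.exp (-V x)) =
      (∫ x, ⟪u, gradient V x⟫ ^ 2 * Real.exp (-V x)) ∧
    0 ≤ ∫ x, iteratedFDeriv ℝ 2 V x ![u, u] * Real.exp (-V x) := by
  have hgr : ∀ x, ⟪u, gradient V x⟫ = fderiv ℝ V x u := by
    intro x
    rw [real_inner_comm, gradient, InnerProductSpace.toDual_symm_apply]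
  have hdiff : Differentiable ℝ V := hV.differentiable (by norm_num)
  have hdd : Differentiable ℝ (fderiv ℝ V) :=
    (hV.fderiv_right (m := 1) (by norm_num)).differentiable (by norm_num)
  have key : ∫ x, (iteratedFDeriv ℝ 2 V x ![u, u] * Real.exp (-V x)
      - ⟪u, gradient V x⟫ ^ 2 * Real.exp (-V x)) = 0 := by
    apply aux_gen (g := fun x => ⟪u, gradient V x⟫ * Real.exp (-V x)) (v := u) (h1.sub h2)
    · intro x
      simp only [hgr]
      have e1 : HasFDerivAt (fun y => fderiv ℝ V y u) ((fderiv ℝ (fderiv ℝ V) x).flip u) x := by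
        simpa using (hdd x).hasFDerivAt.clm_apply (hasFDerivAt_const u x)
      have e2 := ((hdiff x).hasFDerivAt.neg).exp
      convert! (e1.mul e2).hasLineDerivAt u using 1
      rw [Pi.sub_apply, iteratedFDeriv_two_apply]
      simp
      ring
    · rw [← Metric.cobounded_eq_cocompact]
      exact hdecay
  rw [integral_sub h1 h2, sub_eq_zero] at key
  refine ⟨key, ?_⟩
  rw [key]
  exact integral_nonneg fun x => by positivity
end

section
/- Let H be a real Hilbert space and P : [0,∞) → (H →L H) a strongly continuous semigroup of self-adjoint contractions: P(0) = id, P(s+t) = P(s) ∘ P(t), each P(t) is self-adjoint with operator norm at most 1, and t ↦ P(t)f is continuous for each f. Let c > 0 and let C be a dense subset of H such that for every f ∈ C there is a constant c_f with ‖P(t)f‖² ≤ c_f · e^{−ct} for all t ≥ 0. Then for every f ∈ H and every t ≥ 0, ‖P(t)f‖² ≤ e^{−ct} · ‖f‖². -/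
open Set
open scoped RealInnerProductSpace

/-- Self-improvement of exponential decay for a strongly continuous
semigroup of self-adjoint contractions on a Hilbert space: decay with arbitrary prefactor
on a dense set upgrades to decay with prefactor `‖f‖²` everywhere. -/
theorem stmt_17 {H : Type*} [NormedAddCommGroup H] [InnerProductSpace ℝ H]
    [CompleteSpace H]
    (P : ℝ → H →L[ℝ] H)
    (hP0 : P 0 = ContinuousLinearMap.id ℝ H)
    (hPsemi : ∀ s, 0 ≤ s → ∀ t, 0 ≤ t → P (s + t) = (P s).comp (P t))
    (hPself : ∀ t, 0 ≤ t → ∀ u v : H, ⟪P t u, v⟫ = ⟪u, P t v⟫)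
    (hPcontr : ∀ t, 0 ≤ t → ‖P t‖ ≤ 1)
    (hPcont : ∀ f : H, ContinuousOn (fun t => P t f) (Set.Ici 0))
    (c : ℝ) (hc : 0 < c)
    (C : Set H) (hC : Dense C)
    (hdecay : ∀ f ∈ C, ∃ cf : ℝ, ∀ t, 0 ≤ t → ‖P t f‖ ^ 2 ≤ cf * Real.exp (-c * t)) :
    ∀ f : H, ∀ t, 0 ≤ t → ‖P t f‖ ^ 2 ≤ Real.exp (-c * t) * ‖f‖ ^ 2 := by
  intro f t ht
  have hcl : IsClosed {f : H | ‖P t f‖ ^ 2 ≤ Real.exp (-c * t) * ‖f‖ ^ 2} :=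
    isClosed_le (by fun_prop) (by fun_prop)
  suffices hsub : C ⊆ {f : H | ‖P t f‖ ^ 2 ≤ Real.exp (-c * t) * ‖f‖ ^ 2} from
    hcl.closure_subset_iff.mpr hsub (hC f)
  clear f
  intro f hf
  obtain ⟨K, hK⟩ := hdecay f hf
  show ‖P t f‖ ^ 2 ≤ Real.exp (-c * t) * ‖f‖ ^ 2
  rcases eq_or_ne f 0 with rfl | hf0
  · simp
  have hn : 0 < ‖f‖ ^ 2 := by positivity
  have key : ∀ s, 0 ≤ s → (‖P s f‖ ^ 2) ^ 2 ≤ ‖P (2 * s) f‖ ^ 2 * ‖f‖ ^ 2 := by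
    intro s hs
    have h1 : ‖P s f‖ ^ 2 ≤ ‖P (2 * s) f‖ * ‖f‖ := by
      have h2 : ‖P s f‖ ^ 2 = ⟪f, P (2 * s) f⟫ := by
        rw [← real_inner_self_eq_norm_sq, hPself s hs, two_mul, hPsemi s hs s hs]
        rfl
      rw [h2]
      exact (real_inner_le_norm f (P (2 * s) f)).trans_eq (mul_comm _ _)
    rw [← mul_pow]
    exact pow_le_pow_left₀ (by positivity) h1 2
  let b : ℝ → ℝ := fun s => ‖P s f‖ ^ 2 * Real.exp (c * s) / ‖f‖ ^ 2
  have hb0 : ∀ s, 0 ≤ b s := fun s => by positivity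
  have hb2 : ∀ s, 0 ≤ s → b s ^ 2 ≤ b (2 * s) := by
    intro s hs
    have he : Real.exp (c * (2 * s)) = Real.exp (c * s) ^ 2 := by
      rw [← Real.exp_nat_mul]; congr 1; push_cast; ring
    simp only [b]
    rw [he, div_pow, mul_pow, div_le_div_iff₀ (by positivity) hn]
    have := mul_le_mul_of_nonneg_right (key s hs)
      (show 0 ≤ Real.exp (c * s) ^ 2 * ‖f‖ ^ 2 by positivity)
    nlinarith [this]
  have hbn : ∀ n : ℕ, b t ^ (2 ^ n) ≤ b (2 ^ n * t) := by
    intro n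
    induction n with
    | zero => simp
    | succ n ih =>
      calc b t ^ (2 ^ (n + 1)) = (b t ^ (2 ^ n)) ^ 2 := by rw [← pow_mul, pow_succ]
        _ ≤ b (2 ^ n * t) ^ 2 := pow_le_pow_left₀ (pow_nonneg (hb0 t) _) ih 2
        _ ≤ b (2 * (2 ^ n * t)) := hb2 _ (by positivity)
        _ = b (2 ^ (n + 1) * t) := by congr 1; ring
  have hbK : ∀ s, 0 ≤ s → b s ≤ K / ‖f‖ ^ 2 := by
    intro s hs
    have h1 := mul_le_mul_of_nonneg_right (hK s hs) (Real.exp_pos (c * s)).le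
    rw [mul_assoc, ← Real.exp_add] at h1
    have h2 : -c * s + c * s = 0 := by ring
    rw [h2, Real.exp_zero, mul_one] at h1
    exact div_le_div_of_nonneg_right h1 hn.le
  have hb1 : b t ≤ 1 := by
    by_contra! h
    obtain ⟨n, hn'⟩ := pow_unbounded_of_one_lt (K / ‖f‖ ^ 2) h
    have h1 : b t ^ n ≤ b t ^ (2 ^ n) := pow_le_pow_right₀ h.le Nat.lt_two_pow_self.le
    have h2 := hbK (2 ^ n * t) (by positivity)
    linarith [hbn n]
  have h3 : ‖P t f‖ ^ 2 * Real.exp (c * t) ≤ ‖f‖ ^ 2 := by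
    have := (div_le_iff₀ hn).mp hb1
    linarith
  have h4 := mul_le_mul_of_nonneg_left h3 (Real.exp_pos (-c * t)).le
  have h5 : Real.exp (-c * t) * (‖P t f‖ ^ 2 * Real.exp (c * t)) = ‖P t f‖ ^ 2 := by
    rw [mul_left_comm, ← Real.exp_add]
    have h2 : -c * t + c * t = 0 := by ring
    rw [h2, Real.exp_zero, mul_one]
  linarith
end
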